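/- arXiv:2304.13332 — 3 statements merged into one kernel-verified Lean document; each statement's English description precedes it below -/
import Mathlib

section
/- There exists an absolute constant C > 0 such that for every measure space with measure μ, every p ∈ [1,∞], every compact set K in X = L_p(μ), every γ ∈ (0,1], and every sequence produced by the weak greedy algorithm with parameter γ, the error satisfies σ_n(K) ≤ C γ^{−1} n^{1/2 + |1/2 − 1/p|} · ε_n(co(K)) for all n ≥ 1. -/
open scoped RealInnerProductSpace ENNReal

/-- Dyadic entropy number: infimum of all `ε > 0` such that `K` is covered by `2^n`
balls of radius `ε`. -/
noncomputable def entropyNumber {X : Type*} [NormedAddCommGroup X] (n : ℕ) (K : Set X) : ℝ :=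
  sInf {ε : ℝ | 0 < ε ∧ ∃ c : Fin (2 ^ n) → X, K ⊆ ⋃ i, Metric.closedBall (c i) ε}

/-- Symmetric (absolutely) convex hull: closure of the set of finite sums `∑ cᵢ gᵢ`
with `gᵢ ∈ K` and `∑ |cᵢ| ≤ 1`. -/
noncomputable def symConvexHull {X : Type*} [NormedAddCommGroup X] [NormedSpace ℝ X]
    (K : Set X) : Set X :=
  closure {x : X | ∃ (m : ℕ) (c : Fin m → ℝ) (g : Fin m → X),
    (∀ i, g i ∈ K) ∧ (∑ i, |c i|) ≤ 1 ∧ x = ∑ i, c i • g i}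

/-- Volume of the unit Euclidean ball in `ℝⁿ`. -/
noncomputable def unitBallVol (n : ℕ) : ℝ :=
  Real.pi ^ ((n : ℝ) / 2) / Real.Gamma ((n : ℝ) / 2 + 1)

/-- Span of the first `n` terms of a sequence. -/
noncomputable def spanFirst {X : Type*} [NormedAddCommGroup X] [NormedSpace ℝ X]
    (f : ℕ → X) (n : ℕ) : Submodule ℝ X :=
  Submodule.span ℝ (f '' {i | i < n})

/-- The weak greedy algorithm with parameter `γ`: `f n` (the `(n+1)`-st iterate) lies in `K`
and its distance to the span of the previous iterates is at least `γ` times that of any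
other element of `K`. -/
def IsWeakGreedy {X : Type*} [NormedAddCommGroup X] [NormedSpace ℝ X]
    (γ : ℝ) (K : Set X) (f : ℕ → X) : Prop :=
  ∀ n : ℕ, f n ∈ K ∧ ∀ g ∈ K,
    γ * Metric.infDist g (spanFirst f n : Set X) ≤ Metric.infDist (f n) (spanFirst f n : Set X)

/-- The greedy error `σ_n(K) = sup_{f ∈ K} dist(f, span{f_1,…,f_n})`. -/
noncomputable def greedyError {X : Type*} [NormedAddCommGroup X] [NormedSpace ℝ X]
    (K : Set X) (f : ℕ → X) (n : ℕ) : ℝ :=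
  sSup ((fun g => Metric.infDist g (spanFirst f n : Set X)) '' K)

/-- Kolmogorov `n`-width. -/
noncomputable def kolmogorovWidth {X : Type*} [NormedAddCommGroup X] [NormedSpace ℝ X]
    (n : ℕ) (K : Set X) : ℝ :=
  sInf {d : ℝ | ∃ Y : Submodule ℝ X, FiniteDimensional ℝ Y ∧ Module.finrank ℝ Y ≤ n ∧
    d = sSup ((fun g => Metric.infDist g (Y : Set X)) '' K)}

/-- `f` admits an `ℓ¹` representation over the dictionary `D`. -/
def HasL1Rep {X : Type*} [NormedAddCommGroup X] [NormedSpace ℝ X] (D : Set X) (f : X) : Prop :=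
  ∃ (c : ℕ → ℝ) (g : ℕ → X), (∀ i, g i ∈ D) ∧ Summable (fun i => |c i|) ∧
    HasSum (fun i => c i • g i) f

/-- The variation norm `‖f‖_{L₁(D)}`. -/
noncomputable def varNorm {X : Type*} [NormedAddCommGroup X] [NormedSpace ℝ X]
    (D : Set X) (f : X) : ℝ :=
  sInf {t : ℝ | ∃ (c : ℕ → ℝ) (g : ℕ → X), (∀ i, g i ∈ D) ∧ Summable (fun i => |c i|) ∧
    HasSum (fun i => c i • g i) f ∧ t = ∑' i, |c i|}

/-- The orthogonal greedy algorithm with target `f`: `fa 0 = 0`; at each step `g n ∈ D`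
maximizes `|⟨g, f - fa n⟩|` over `D`, and `fa (n+1)` is the orthogonal projection of `f`
onto `span{g 0, …, g n}`. -/
def IsOGA {X : Type*} [NormedAddCommGroup X] [InnerProductSpace ℝ X]
    (D : Set X) (f : X) (g fa : ℕ → X) : Prop :=
  fa 0 = 0 ∧ ∀ n : ℕ,
    g n ∈ D ∧ (∀ h ∈ D, |⟪h, f - fa n⟫| ≤ |⟪g n, f - fa n⟫|) ∧
    fa (n + 1) ∈ Submodule.span ℝ (g '' {i | i ≤ n}) ∧
    ∀ w ∈ Submodule.span ℝ (g '' {i | i ≤ n}), ⟪f - fa (n + 1), w⟫ = 0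

/-- Best `n`-term approximation error `E_n(f, D)`. -/
noncomputable def bestNTermError {X : Type*} [NormedAddCommGroup X] [NormedSpace ℝ X]
    (D : Set X) (n : ℕ) (f : X) : ℝ :=
  sInf {r : ℝ | ∃ (c : Fin n → ℝ) (g : Fin n → X), (∀ i, g i ∈ D) ∧ r = ‖f - ∑ i, c i • g i‖}

/-- The K-functional `K(t, g)` between `X` and `L₁(D)`. -/
noncomputable def Kfunctional {X : Type*} [NormedAddCommGroup X] [NormedSpace ℝ X]
    (D : Set X) (t : ℝ) (gg : X) : ℝ :=
  sInf {s : ℝ | ∃ h : X, HasL1Rep D h ∧ s = ‖gg - h‖ + t * varNorm D h}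

/-- The interpolation norm `‖g‖_θ = sup_{t > 0} t^{-θ} K(t, g)`. -/
noncomputable def interpNorm {X : Type*} [NormedAddCommGroup X] [NormedSpace ℝ X]
    (D : Set X) (θ : ℝ) (gg : X) : ℝ :=
  sSup ((fun t => t ^ (-θ) * Kfunctional D t gg) '' Set.Ioi (0 : ℝ))

/-! Choose functionals `l k` of norm at most one that vanish on `spanFirst f k` and take the value
`dist (f k, spanFirst f k)` at `f k`. The map `x ↦ (l k x)` sends the absolutely convex hull of the
`f k` onto the image of a cross-polytope under a triangular matrix, a set of volume
`2 ^ n / n !` times the product of the distances. It sends a ball of radius `ε` into a translate of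
the polytope `{y | ∀ s, ∑ ±y k ≤ ε * ‖∑ ±l k‖}`. By slicing and induction on `n`, a polytope cut out
by one half-space for each sign vector, with mean level `m`, has volume at most
`(2 * m) ^ n / n !`: cross-polytopes are extremal. Covering by `2 ^ n` balls thus bounds the
geometric mean of the distances by `2 * ε * 𝔼 ‖∑ ±l k‖`.

By duality `𝔼 ‖∑ ±l k‖` is at most the supremum of `∑ k, ‖𝔼 s, s k • x s‖` over functions `x` from
the sign vectors to the unit ball. In `L_p` this reduces to scalar functions by integrating a
pointwise inequality, which comes from the Bessel inequality for `p ≥ 2` and from the dual estimate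
on the `q`-th moments of Rademacher sums for `p ≤ 2`. -/

open scoped BigOperators

section Rademacher

variable {ι : Type*}

/-- The `k`-th coordinate of a vector of signs, as a function of the Boolean vector encoding it. -/
def rademacher (k : ι) (s : ι → Bool) : ℝ := if s k then 1 else -1

lemma abs_rademacher (k : ι) (s : ι → Bool) : |rademacher k s| = 1 := by
  unfold rademacher
  split_ifs <;> simp

lemma rademacher_mul_self (k : ι) (s : ι → Bool) : rademacher k s * rademacher k s = 1 := by
  unfold rademacher
  split_ifs <;> simp

lemma rademacher_update_not_self [DecidableEq ι] (k : ι) (s : ι → Bool) :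
    rademacher k (Function.update s k (!s k)) = -rademacher k s := by
  cases h : s k <;> simp [rademacher, h]

lemma rademacher_update_of_ne [DecidableEq ι] {j k : ι} (hjk : j ≠ k) (s : ι → Bool) (b : Bool) :
    rademacher j (Function.update s k b) = rademacher j s := by
  simp only [rademacher, Function.update_of_ne hjk]

variable [Fintype ι] {X Y : Type*}

/-- The Rademacher sum `∑ ±x k` with the signs encoded by `s`. -/
def rademacherSum [AddCommGroup X] [Module ℝ X] (x : ι → X) (s : ι → Bool) : X :=
  ∑ k, rademacher k s • x k

lemma abs_rademacherSum_le (b : ι → ℝ) (s : ι → Bool) : |rademacherSum b s| ≤ ∑ k, |b k| := by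
  refine (Finset.abs_sum_le_sum_abs _ _).trans_eq ?_
  simp only [smul_eq_mul, abs_mul, abs_rademacher, one_mul]

variable [DecidableEq ι]

lemma expect_eq_zero_of_odd (k : ι) {F : (ι → Bool) → ℝ}
    (hF : ∀ s, F (Function.update s k (!s k)) = -F s) : 𝔼 s, F s = 0 := by
  have hflip : Function.Involutive (fun s : ι → Bool => Function.update s k (!s k)) := fun s => by
    simp
  have h : 𝔼 s, F s = 𝔼 s, -F s :=
    Fintype.expect_equiv hflip.toPerm _ _ fun s => by simp [hF]
  rw [Finset.expect_neg_distrib] at h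
  linarith

lemma expect_rademacher (k : ι) : 𝔼 s, rademacher k s = 0 :=
  expect_eq_zero_of_odd k (rademacher_update_not_self k)

lemma expect_rademacher_mul_rademacher (j k : ι) :
    𝔼 s, rademacher j s * rademacher k s = if j = k then 1 else 0 := by
  split_ifs with hjk
  · subst hjk
    simp only [rademacher_mul_self, Fintype.expect_const]
  · exact expect_eq_zero_of_odd j fun s => by
      rw [rademacher_update_not_self, rademacher_update_of_ne (Ne.symm hjk), neg_mul]

lemma expect_rademacherSum (b : ι → ℝ) : 𝔼 s, rademacherSum b s = 0 := by
  simp only [rademacherSum, smul_eq_mul, Finset.expect_sum_comm, ← Finset.expect_mul,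
    expect_rademacher, zero_mul, Finset.sum_const_zero]

/-- The first-order Walsh coefficient `𝔼 s, rademacher k s • x s` of a function `x` of the signs.
It is written as a sum because `Finset.expect` would need `X` to be a `ℚ≥0`-module. -/
noncomputable def rademacherCoeff [AddCommGroup X] [Module ℝ X] (x : (ι → Bool) → X) (k : ι) : X :=
  (Fintype.card (ι → Bool) : ℝ)⁻¹ • ∑ s, rademacher k s • x s

lemma rademacherCoeff_eq_expect (x : (ι → Bool) → ℝ) (k : ι) :
    rademacherCoeff x k = 𝔼 s, rademacher k s * x s := by
  simp only [rademacherCoeff, smul_eq_mul, Fintype.expect_eq_sum_div_card, inv_mul_eq_div]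

lemma map_rademacherCoeff [AddCommGroup X] [Module ℝ X] (l : X →ₗ[ℝ] ℝ) (x : (ι → Bool) → X)
    (k : ι) : l (rademacherCoeff x k) = 𝔼 s, rademacher k s * l (x s) := by
  rw [← rademacherCoeff_eq_expect]
  simp only [rademacherCoeff, map_smul, map_sum]

lemma sum_apply_rademacherCoeff [AddCommGroup X] [Module ℝ X] [AddCommGroup Y] [Module ℝ Y]
    (B : Y →ₗ[ℝ] X →ₗ[ℝ] ℝ) (y : ι → Y) (x : (ι → Bool) → X) :
    ∑ k, B (y k) (rademacherCoeff x k) = 𝔼 s, B (rademacherSum y s) (x s) := by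
  simp only [map_rademacherCoeff, rademacherSum, map_sum, map_smul, LinearMap.sum_apply,
    LinearMap.smul_apply, smul_eq_mul, Finset.expect_sum_comm]

lemma rademacherCoeff_rademacherSum (b : ι → ℝ) : rademacherCoeff (rademacherSum b) = b := by
  ext k
  simp only [rademacherCoeff_eq_expect, rademacherSum, smul_eq_mul, Finset.mul_sum, ← mul_assoc,
    Finset.expect_sum_comm, ← Finset.expect_mul, expect_rademacher_mul_rademacher, ite_mul,
    one_mul, zero_mul, Finset.sum_ite_eq, Finset.mem_univ, if_true]

lemma sum_mul_rademacherCoeff (b : ι → ℝ) (x : (ι → Bool) → ℝ) :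
    ∑ k, b k * rademacherCoeff x k = 𝔼 s, rademacherSum b s * x s :=
  sum_apply_rademacherCoeff (LinearMap.mul ℝ ℝ) b x

lemma expect_sq_rademacherSum (b : ι → ℝ) : 𝔼 s, rademacherSum b s ^ 2 = ∑ k, b k ^ 2 := by
  simpa only [rademacherCoeff_rademacherSum, ← sq] using
    (sum_mul_rademacherCoeff b (rademacherSum b)).symm

lemma norm_rademacherCoeff_le [NormedAddCommGroup X] [NormedSpace ℝ X] (x : (ι → Bool) → X)
    (k : ι) : ‖rademacherCoeff x k‖ ≤ 𝔼 s, ‖x s‖ := by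
  rw [rademacherCoeff, norm_smul, norm_inv, RCLike.norm_natCast, Fintype.expect_eq_sum_div_card,
    div_eq_inv_mul]
  gcongr
  refine norm_sum_le_of_le _ fun s _ => ?_
  rw [norm_smul, Real.norm_eq_abs, abs_rademacher, one_mul]

lemma sum_sq_rademacherCoeff_le (x : (ι → Bool) → ℝ) :
    ∑ k, rademacherCoeff x k ^ 2 ≤ 𝔼 s, x s ^ 2 := by
  set y := rademacherCoeff x
  have hcross : 𝔼 s, rademacherSum y s * x s = ∑ k, y k ^ 2 := by
    simp only [← sum_mul_rademacherCoeff, sq, y]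
  have hres : 0 ≤ 𝔼 s, (rademacherSum y s - x s) ^ 2 :=
    Finset.expect_nonneg fun s _ => sq_nonneg _
  simp only [sub_sq, Finset.expect_add_distrib, Finset.expect_sub_distrib, mul_assoc,
    ← Finset.mul_expect, hcross, expect_sq_rademacherSum] at hres
  linarith

end Rademacher

section PowerMeans

variable {α : Type*} [Fintype α]

lemma expect_rpow_le_expect_rpow {r : ℝ} (hr : 1 ≤ r) {f : α → ℝ} (hf : ∀ a, 0 ≤ f a) :
    (𝔼 a, f a) ^ r ≤ 𝔼 a, f a ^ r := by
  cases isEmpty_or_nonempty α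
  · simp [Real.zero_rpow (zero_lt_one.trans_le hr).ne']
  simpa only [Fintype.expect_eq_sum_div_card, div_eq_inv_mul, Finset.mul_sum] using
    Real.rpow_arith_mean_le_arith_mean_rpow Finset.univ (fun _ => (Fintype.card α : ℝ)⁻¹) f
      (fun _ _ => by positivity) (by simp) (fun a _ => hf a) hr

lemma expect_mul_le_Lp_mul_Lq {p q : ℝ} (hpq : p.HolderConjugate q) (f g : α → ℝ) :
    𝔼 a, f a * g a ≤ (𝔼 a, |f a| ^ p) ^ (1 / p) * (𝔼 a, |g a| ^ q) ^ (1 / q) := by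
  have hN : (Fintype.card α : ℝ) = Fintype.card α ^ (1 / p) * Fintype.card α ^ (1 / q) := by
    rw [← Real.rpow_add_of_nonneg (Nat.cast_nonneg _) hpq.one_div_nonneg hpq.symm.one_div_nonneg,
      one_div, one_div, hpq.inv_add_inv_eq_one, Real.rpow_one]
  simp only [Fintype.expect_eq_sum_div_card]
  rw [Real.div_rpow (by positivity) (by positivity), Real.div_rpow (by positivity) (by positivity),
    div_mul_div_comm, ← hN]
  gcongr
  exact Real.inner_le_Lp_mul_Lq _ _ _ hpq

lemma sq_rpow_half (t q : ℝ) : (t ^ 2) ^ (q / 2) = |t| ^ q := by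
  rw [← sq_abs, ← Real.rpow_natCast, ← Real.rpow_mul (abs_nonneg t)]
  congr 1
  push_cast
  ring

lemma expect_abs_rpow_mul_expect_sq_le {q : ℝ} (hq : 2 ≤ q) (b : α → ℝ) :
    (𝔼 a, |b a|) ^ (q - 2) * 𝔼 a, b a ^ 2 ≤ 𝔼 a, |b a| ^ q := by
  set M := 𝔼 a, |b a| ^ q
  have hM : 0 ≤ M := Finset.expect_nonneg fun _ _ => by positivity
  have hb : 0 ≤ 𝔼 a, |b a| := Finset.expect_nonneg fun _ _ => abs_nonneg _
  have hb2 : 0 ≤ 𝔼 a, b a ^ 2 := Finset.expect_nonneg fun _ _ => sq_nonneg _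
  have hq0 : 0 < q := by linarith
  have hL1 : (𝔼 a, |b a|) ^ (q - 2) ≤ M ^ ((q - 2) / q) := by
    calc (𝔼 a, |b a|) ^ (q - 2) = ((𝔼 a, |b a|) ^ q) ^ ((q - 2) / q) := by
          rw [← Real.rpow_mul hb, mul_div_cancel₀ _ hq0.ne']
      _ ≤ M ^ ((q - 2) / q) :=
          Real.rpow_le_rpow (Real.rpow_nonneg hb _)
            (expect_rpow_le_expect_rpow (by linarith) fun _ => abs_nonneg _)
            (div_nonneg (by linarith) hq0.le)
  have hL2 : 𝔼 a, b a ^ 2 ≤ M ^ (2 / q) := by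
    calc 𝔼 a, b a ^ 2 = ((𝔼 a, b a ^ 2) ^ (q / 2)) ^ (2 / q) := by
          rw [← Real.rpow_mul hb2, div_mul_div_cancel₀ two_ne_zero, div_self hq0.ne',
            Real.rpow_one]
      _ ≤ (𝔼 a, (b a ^ 2) ^ (q / 2)) ^ (2 / q) :=
          Real.rpow_le_rpow (Real.rpow_nonneg hb2 _)
            (expect_rpow_le_expect_rpow (by linarith) fun _ => sq_nonneg _) (by positivity)
      _ = M ^ (2 / q) := by simp only [sq_rpow_half, M]
  calc (𝔼 a, |b a|) ^ (q - 2) * 𝔼 a, b a ^ 2 ≤ M ^ ((q - 2) / q) * M ^ (2 / q) := by gcongr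
    _ = M := by
      rw [← Real.rpow_add_of_nonneg hM (div_nonneg (by linarith) hq0.le) (by positivity),
        ← add_div, sub_add_cancel, div_self hq0.ne', Real.rpow_one]

lemma sum_rpow_le_rpow_sum {r : ℝ} (hr : 1 ≤ r) {f : α → ℝ} (hf : ∀ a, 0 ≤ f a) :
    ∑ a, f a ^ r ≤ (∑ a, f a) ^ r := by
  have hsplit {t : ℝ} (ht : 0 ≤ t) : t ^ r = t * t ^ (r - 1) := by
    rw [← Real.rpow_one_add' ht (by linarith), add_sub_cancel]
  calc ∑ a, f a ^ r = ∑ a, f a * f a ^ (r - 1) :=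
        Finset.sum_congr rfl fun a _ => hsplit (hf a)
    _ ≤ ∑ a, f a * (∑ b, f b) ^ (r - 1) := by
        refine Finset.sum_le_sum fun a ha => mul_le_mul_of_nonneg_left ?_ (hf a)
        exact Real.rpow_le_rpow (hf a) (Finset.single_le_sum (fun b _ => hf b) ha) (by linarith)
    _ = (∑ a, f a) ^ r := by
        rw [← Finset.sum_mul, ← hsplit (Finset.sum_nonneg fun a _ => hf a)]

lemma exists_sum_mul_eq_Lp {p q : ℝ} (hpq : p.HolderConjugate q) (y : α → ℝ) :
    ∃ b : α → ℝ, ∑ a, |b a| ^ q ≤ 1 ∧ ∑ a, b a * y a = (∑ a, |y a| ^ p) ^ (1 / p) := by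
  obtain ⟨g, hg, hgy⟩ :=
    (NNReal.isGreatest_Lp Finset.univ (fun a => Real.nnabs (y a)) hpq).1
  have hsign (a : α) : |((SignType.sign (y a) : ℝ) * g a)| ≤ g a := by
    rw [abs_mul, NNReal.abs_eq]
    refine mul_le_of_le_one_left (g a).coe_nonneg ?_
    cases SignType.sign (y a) <;> simp
  refine ⟨fun a => SignType.sign (y a) * g a, ?_, ?_⟩
  · calc ∑ a, |((SignType.sign (y a) : ℝ) * g a)| ^ q ≤ ∑ a, (g a : ℝ) ^ q :=
          Finset.sum_le_sum fun a _ =>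
            Real.rpow_le_rpow (abs_nonneg _) (hsign a) hpq.symm.nonneg
      _ ≤ 1 := mod_cast hg
  · calc ∑ a, (SignType.sign (y a) : ℝ) * g a * y a = ∑ a, |y a| * g a :=
          Finset.sum_congr rfl fun a _ => by rw [mul_right_comm, sign_mul_self]
      _ = (∑ a, |y a| ^ p) ^ (1 / p) := by
          simpa using congrArg ((↑) : NNReal → ℝ) hgy

end PowerMeans

section Khintchine

variable {ι : Type*} [Fintype ι] [DecidableEq ι]

-- The size `n ^ (q - 2)` interpolates between the isometry at `q = 2` and the sup bound at `q = ∞`.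
lemma expect_abs_rademacherSum_rpow_le {q : ℝ} (hq : 2 ≤ q) (b : ι → ℝ) :
    𝔼 s, |rademacherSum b s| ^ q ≤ (Fintype.card ι : ℝ) ^ (q - 2) * ∑ k, |b k| ^ q := by
  have hpoint (s : ι → Bool) :
      |rademacherSum b s| ^ q ≤ (∑ k, |b k|) ^ (q - 2) * rademacherSum b s ^ 2 := by
    calc |rademacherSum b s| ^ q = |rademacherSum b s| ^ (q - 2) * rademacherSum b s ^ 2 := by
          rw [← sq_abs (rademacherSum b s), ← Real.rpow_natCast,
            ← Real.rpow_add_of_nonneg (abs_nonneg _) (by linarith) (Nat.cast_nonneg 2)]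
          simp
      _ ≤ (∑ k, |b k|) ^ (q - 2) * rademacherSum b s ^ 2 :=
          mul_le_mul_of_nonneg_right
            (Real.rpow_le_rpow (abs_nonneg _) (abs_rademacherSum_le b s) (by linarith))
            (sq_nonneg _)
  calc 𝔼 s, |rademacherSum b s| ^ q
      ≤ 𝔼 s, (∑ k, |b k|) ^ (q - 2) * rademacherSum b s ^ 2 :=
        Finset.expect_le_expect fun s _ => hpoint s
    _ = (∑ k, |b k|) ^ (q - 2) * ∑ k, b k ^ 2 := by
        rw [← Finset.mul_expect, expect_sq_rademacherSum]
    _ = (Fintype.card ι : ℝ) ^ (q - 2) *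
          (Fintype.card ι * ((𝔼 k, |b k|) ^ (q - 2) * 𝔼 k, b k ^ 2)) := by
        rw [← Fintype.card_mul_expect, ← Fintype.card_mul_expect fun k => b k ^ 2,
          Real.mul_rpow (Nat.cast_nonneg _) (Finset.expect_nonneg fun _ _ => abs_nonneg _)]
        ring
    _ ≤ (Fintype.card ι : ℝ) ^ (q - 2) * (Fintype.card ι * 𝔼 k, |b k| ^ q) := by
        gcongr
        exact expect_abs_rpow_mul_expect_sq_le hq b
    _ = (Fintype.card ι : ℝ) ^ (q - 2) * ∑ k, |b k| ^ q := by rw [Fintype.card_mul_expect]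

lemma sum_abs_rademacherCoeff_rpow_le_of_two_le {p : ℝ} (hp : 2 ≤ p) (x : (ι → Bool) → ℝ) :
    ∑ k, |rademacherCoeff x k| ^ p ≤ 𝔼 s, |x s| ^ p := by
  calc ∑ k, |rademacherCoeff x k| ^ p = ∑ k, (rademacherCoeff x k ^ 2) ^ (p / 2) := by
        simp only [sq_rpow_half]
    _ ≤ (∑ k, rademacherCoeff x k ^ 2) ^ (p / 2) :=
        sum_rpow_le_rpow_sum (by linarith) fun _ => sq_nonneg _
    _ ≤ (𝔼 s, x s ^ 2) ^ (p / 2) :=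
        Real.rpow_le_rpow (Finset.sum_nonneg fun _ _ => sq_nonneg _)
          (sum_sq_rademacherCoeff_le x) (by linarith)
    _ ≤ 𝔼 s, (x s ^ 2) ^ (p / 2) :=
        expect_rpow_le_expect_rpow (by linarith) fun _ => sq_nonneg _
    _ = 𝔼 s, |x s| ^ p := by simp only [sq_rpow_half]

lemma sum_norm_rademacherCoeff_le {X : Type*} [NormedAddCommGroup X] [NormedSpace ℝ X]
    (x : (ι → Bool) → X) : ∑ k, ‖rademacherCoeff x k‖ ≤ Fintype.card ι * 𝔼 s, ‖x s‖ := by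
  simpa only [nsmul_eq_mul, Finset.card_univ] using
    Finset.sum_le_card_nsmul Finset.univ _ _ fun k _ => norm_rademacherCoeff_le x k

lemma Lp_rademacherCoeff_le {p q : ℝ} (hpq : p.HolderConjugate q) (hq : 2 ≤ q)
    (x : (ι → Bool) → ℝ) :
    (∑ k, |rademacherCoeff x k| ^ p) ^ (1 / p) ≤
      ((Fintype.card ι : ℝ) ^ (q - 2)) ^ (1 / q) * (𝔼 s, |x s| ^ p) ^ (1 / p) := by
  obtain ⟨b, hb, hbx⟩ := exists_sum_mul_eq_Lp hpq (rademacherCoeff x)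
  calc (∑ k, |rademacherCoeff x k| ^ p) ^ (1 / p) = 𝔼 s, rademacherSum b s * x s := by
        rw [← hbx, sum_mul_rademacherCoeff]
    _ ≤ (𝔼 s, |rademacherSum b s| ^ q) ^ (1 / q) * (𝔼 s, |x s| ^ p) ^ (1 / p) :=
        expect_mul_le_Lp_mul_Lq hpq.symm _ _
    _ ≤ ((Fintype.card ι : ℝ) ^ (q - 2)) ^ (1 / q) * (𝔼 s, |x s| ^ p) ^ (1 / p) := by
        refine mul_le_mul_of_nonneg_right (Real.rpow_le_rpow ?_ ?_ hpq.symm.one_div_nonneg) ?_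
        · exact Finset.expect_nonneg fun _ _ => by positivity
        · exact (expect_abs_rademacherSum_rpow_le hq b).trans
            (mul_le_of_le_one_right (by positivity) hb)
        · exact Real.rpow_nonneg (Finset.expect_nonneg fun _ _ => by positivity) _

lemma sum_abs_rademacherCoeff_rpow_le_of_le_two {p : ℝ} (hp1 : 1 ≤ p) (hp2 : p ≤ 2)
    (x : (ι → Bool) → ℝ) :
    ∑ k, |rademacherCoeff x k| ^ p ≤ (Fintype.card ι : ℝ) ^ (2 - p) * 𝔼 s, |x s| ^ p := by
  rcases hp1.eq_or_lt with rfl | hp1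
  · simpa only [Real.rpow_one, Real.norm_eq_abs, show (2 : ℝ) - 1 = 1 by norm_num] using
      sum_norm_rademacherCoeff_le x
  have hpq := Real.HolderConjugate.conjExponent hp1
  set q := p.conjExponent
  have hq : 2 ≤ q := by
    rw [hpq.conjugate_eq, le_div_iff₀ hpq.sub_one_pos]
    linarith
  have hexp : (q - 2) * (1 / q) * p = 2 - p := by
    rw [mul_one_div, sub_div, div_self hpq.symm.ne_zero, sub_mul, one_mul, div_mul_eq_mul_div,
      mul_div_assoc, hpq.div_conj_eq_sub_one]
    ring
  have hE : 0 ≤ 𝔼 s, |x s| ^ p := Finset.expect_nonneg fun _ _ => by positivity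
  calc ∑ k, |rademacherCoeff x k| ^ p = ((∑ k, |rademacherCoeff x k| ^ p) ^ (1 / p)) ^ p := by
        rw [one_div, Real.rpow_inv_rpow (by positivity) hpq.ne_zero]
    _ ≤ (((Fintype.card ι : ℝ) ^ (q - 2)) ^ (1 / q) * (𝔼 s, |x s| ^ p) ^ (1 / p)) ^ p :=
        Real.rpow_le_rpow (by positivity) (Lp_rademacherCoeff_le hpq hq x) hpq.nonneg
    _ = (Fintype.card ι : ℝ) ^ (2 - p) * 𝔼 s, |x s| ^ p := by
        rw [Real.mul_rpow (by positivity) (Real.rpow_nonneg hE _), one_div p,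
          Real.rpow_inv_rpow hE hpq.ne_zero, ← Real.rpow_mul (Nat.cast_nonneg _),
          ← Real.rpow_mul (Nat.cast_nonneg _), hexp]

end Khintchine

section SignPolytope

open MeasureTheory

/-- The polytope cut out by the half-spaces normal to all sign vectors, at the levels given by
`h`. -/
def signPolytope {ι : Type*} [Fintype ι] (h : (ι → Bool) → ℝ) : Set (ι → ℝ) :=
  {y | ∀ s, rademacherSum y s ≤ h s}

lemma measurableSet_signPolytope {ι : Type*} [Fintype ι] (h : (ι → Bool) → ℝ) :
    MeasurableSet (signPolytope h) := by
  simp only [signPolytope, Set.ofPred_forall]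
  exact MeasurableSet.iInter fun s =>
    measurableSet_le (by unfold rademacherSum; fun_prop) measurable_const

lemma expect_nonneg_of_signPolytope_nonempty {ι : Type*} [Fintype ι] [DecidableEq ι]
    {h : (ι → Bool) → ℝ} (hh : (signPolytope h).Nonempty) : 0 ≤ 𝔼 s, h s := by
  obtain ⟨y, hy⟩ := hh
  exact (expect_rademacherSum y).symm.trans_le (Finset.expect_le_expect fun s _ => hy s)

variable {n : ℕ}

lemma rademacherSum_cons {X : Type*} [AddCommGroup X] [Module ℝ X] (x : X) (y : Fin n → X)
    (b : Bool) (s : Fin n → Bool) :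
    rademacherSum (Fin.cons x y : Fin (n + 1) → X) (Fin.cons b s) =
      (if b then x else -x) + rademacherSum y s := by
  cases b <;> simp [rademacherSum, rademacher, Fin.sum_univ_succ]

lemma expect_sign_cons (h : (Fin (n + 1) → Bool) → ℝ) :
    𝔼 s, h s = (𝔼 s, h (Fin.cons true s) + 𝔼 s, h (Fin.cons false s)) / 2 := by
  have hsum : ∑ s, h s = ∑ s, h (Fin.cons true s) + ∑ s, h (Fin.cons false s) := by
    rw [← (Fin.consEquiv fun _ => Bool).sum_comp h, Fintype.sum_prod_type, Fintype.sum_bool]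
    rfl
  simp only [Fintype.expect_eq_sum_div_card, hsum, Fintype.card_pi_const, Fintype.card_bool,
    pow_succ]
  push_cast
  ring

/-- The levels of the slice `{y | Fin.cons t y ∈ signPolytope h}`, again a sign polytope. -/
def sliceLevel (h : (Fin (n + 1) → Bool) → ℝ) (t : ℝ) (s : Fin n → Bool) : ℝ :=
  min (h (Fin.cons true s) - t) (h (Fin.cons false s) + t)

lemma cons_mem_signPolytope_iff {h : (Fin (n + 1) → Bool) → ℝ} {t : ℝ} {y : Fin n → ℝ} :
    Fin.cons t y ∈ signPolytope h ↔ y ∈ signPolytope (sliceLevel h t) := by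
  have hcons {P : (Fin (n + 1) → Bool) → Prop} :
      (∀ s, P s) ↔ ∀ s, P (Fin.cons true s) ∧ P (Fin.cons false s) := by
    rw [Fin.forall_fin_succ_pi, forall_comm]
    simp only [Bool.forall_bool, and_comm]
  simp only [signPolytope, Set.mem_ofPred_eq, hcons, rademacherSum_cons, sliceLevel, le_min_iff,
    if_true, Bool.false_eq_true, if_false]
  refine forall_congr' fun s => and_congr ?_ ?_ <;> constructor <;> intro h <;> linarith

lemma expect_sliceLevel_le (h : (Fin (n + 1) → Bool) → ℝ) (t : ℝ) :
    𝔼 s, sliceLevel h t s ≤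
      min (𝔼 s, h (Fin.cons true s) - t) (𝔼 s, h (Fin.cons false s) + t) := by
  refine le_min ?_ ?_
  · calc 𝔼 s, sliceLevel h t s ≤ 𝔼 s, (h (Fin.cons true s) - t) :=
          Finset.expect_le_expect fun s _ => min_le_left _ _
      _ = 𝔼 s, h (Fin.cons true s) - t := by
          rw [Finset.expect_sub_distrib, Fintype.expect_const]
  · calc 𝔼 s, sliceLevel h t s ≤ 𝔼 s, (h (Fin.cons false s) + t) :=
          Finset.expect_le_expect fun s _ => min_le_right _ _
      _ = 𝔼 s, h (Fin.cons false s) + t := by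
          rw [Finset.expect_add_distrib, Fintype.expect_const]

lemma mem_Icc_of_signPolytope_sliceLevel_nonempty {h : (Fin (n + 1) → Bool) → ℝ} {t : ℝ}
    (ht : (signPolytope (sliceLevel h t)).Nonempty) :
    t ∈ Set.Icc (-𝔼 s, h (Fin.cons false s)) (𝔼 s, h (Fin.cons true s)) := by
  obtain ⟨htrue, hfalse⟩ := le_min_iff.1
    ((expect_nonneg_of_signPolytope_nonempty ht).trans (expect_sliceLevel_le h t))
  constructor <;> linarith

lemma volume_eq_lintegral_volume_cons {S : Set (Fin (n + 1) → ℝ)} (hS : MeasurableSet S) :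
    volume S = ∫⁻ t, volume {y : Fin n → ℝ | (Fin.cons t y : Fin (n + 1) → ℝ) ∈ S} := by
  have e := (volume_preserving_piFinSuccAbove (fun _ : Fin (n + 1) => ℝ) 0).symm
  rw [← e.measure_preimage hS.nullMeasurableSet, Measure.volume_eq_prod,
    Measure.prod_apply (e.measurable hS)]
  refine lintegral_congr fun t => congrArg volume (Set.ext fun y => ?_)
  simp [MeasurableEquiv.piFinSuccAbove, Fin.consEquiv]

lemma integral_min_pow (n : ℕ) {a b : ℝ} (hab : 0 ≤ a + b) :
    ∫ t in -b..a, min (a - t) (b + t) ^ n = 2 * ((a + b) / 2) ^ (n + 1) / (n + 1) := by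
  have hint (u v : ℝ) : IntervalIntegrable (fun t => min (a - t) (b + t) ^ n) volume u v :=
    Continuous.intervalIntegrable (by fun_prop) u v
  have hleft : ∫ t in -b..(a - b) / 2, min (a - t) (b + t) ^ n =
      ((a + b) / 2) ^ (n + 1) / (n + 1) := by
    calc _ = ∫ t in -b..(a - b) / 2, (b + t) ^ n := by
          refine intervalIntegral.integral_congr fun t ht => ?_
          rw [Set.uIcc_of_le (by linarith)] at ht
          simp only [min_eq_right (show b + t ≤ a - t by linarith [ht.2])]
      _ = _ := by
          rw [intervalIntegral.integral_comp_add_left (fun t => t ^ n), integral_pow,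
            add_neg_cancel, zero_pow n.succ_ne_zero, sub_zero,
            show b + (a - b) / 2 = (a + b) / 2 by ring]
  have hright : ∫ t in (a - b) / 2..a, min (a - t) (b + t) ^ n =
      ((a + b) / 2) ^ (n + 1) / (n + 1) := by
    calc _ = ∫ t in (a - b) / 2..a, (a - t) ^ n := by
          refine intervalIntegral.integral_congr fun t ht => ?_
          rw [Set.uIcc_of_le (by linarith)] at ht
          simp only [min_eq_left (show a - t ≤ b + t by linarith [ht.1])]
      _ = _ := by
          rw [intervalIntegral.integral_comp_sub_left (fun t => t ^ n), integral_pow,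
            sub_self, zero_pow n.succ_ne_zero, sub_zero,
            show a - (a - b) / 2 = (a + b) / 2 by ring]
  rw [← intervalIntegral.integral_add_adjacent_intervals (hint _ ((a - b) / 2)) (hint _ _),
    hleft, hright]
  ring

lemma setLIntegral_min_pow (n : ℕ) {a b : ℝ} (hab : 0 ≤ a + b) :
    ∫⁻ t in Set.Icc (-b) a, ENNReal.ofReal (min (a - t) (b + t) ^ n) =
      ENNReal.ofReal (2 * ((a + b) / 2) ^ (n + 1) / (n + 1)) := by
  rw [← integral_min_pow n hab, intervalIntegral.integral_of_le (by linarith),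
    ← integral_Icc_eq_integral_Ioc, ofReal_integral_eq_lintegral_ofReal]
  · exact (Continuous.continuousOn (by fun_prop)).integrableOn_Icc
  · refine (ae_restrict_iff' measurableSet_Icc).2 (.of_forall fun t ht => ?_)
    exact pow_nonneg (le_min (by linarith [ht.2]) (by linarith [ht.1])) n

theorem volume_signPolytope_le (h : (Fin n → Bool) → ℝ) (hh : 0 ≤ 𝔼 s, h s) :
    volume (signPolytope h) ≤ ENNReal.ofReal ((2 * 𝔼 s, h s) ^ n / n.factorial) := by
  induction n with
  | zero => exact (measure_mono (Set.subset_univ _)).trans (by simp [volume_pi])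
  | succ n ih =>
    set a := 𝔼 s : Fin n → Bool, h (Fin.cons true s)
    set b := 𝔼 s : Fin n → Bool, h (Fin.cons false s)
    have hmean : 𝔼 s, h s = (a + b) / 2 := expect_sign_cons h
    have hslice (t : ℝ) : volume (signPolytope (sliceLevel h t)) ≤
        (Set.Icc (-b) a).indicator (fun t => ENNReal.ofReal (2 ^ n / n.factorial) *
          ENNReal.ofReal (min (a - t) (b + t) ^ n)) t := by
      rcases (signPolytope (sliceLevel h t)).eq_empty_or_nonempty with hempty | hne
      · simp only [hempty, measure_empty, zero_le]
      · have h0 := expect_nonneg_of_signPolytope_nonempty hne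
        have hle : 𝔼 s, sliceLevel h t s ≤ min (a - t) (b + t) := expect_sliceLevel_le h t
        rw [Set.indicator_of_mem (mem_Icc_of_signPolytope_sliceLevel_nonempty hne),
          ← ENNReal.ofReal_mul (by positivity), div_mul_eq_mul_div, ← mul_pow]
        refine (ih _ h0).trans ?_
        gcongr
    calc volume (signPolytope h) = ∫⁻ t, volume (signPolytope (sliceLevel h t)) := by
          simp only [volume_eq_lintegral_volume_cons (measurableSet_signPolytope h),
            cons_mem_signPolytope_iff, Set.ofPred_mem_eq]
      _ ≤ ∫⁻ t, (Set.Icc (-b) a).indicator (fun t => ENNReal.ofReal (2 ^ n / n.factorial) *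
            ENNReal.ofReal (min (a - t) (b + t) ^ n)) t := lintegral_mono hslice
      _ = ENNReal.ofReal (2 ^ n / n.factorial) *
          ∫⁻ t in Set.Icc (-b) a, ENNReal.ofReal (min (a - t) (b + t) ^ n) := by
          rw [lintegral_indicator measurableSet_Icc,
            lintegral_const_mul' _ _ ENNReal.ofReal_ne_top]
      _ = ENNReal.ofReal (2 ^ n / n.factorial * (2 * ((a + b) / 2) ^ (n + 1) / (n + 1))) := by
          rw [setLIntegral_min_pow n (by linarith), ENNReal.ofReal_mul (by positivity)]
      _ = ENNReal.ofReal ((2 * 𝔼 s, h s) ^ (n + 1) / (n + 1).factorial) := by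
          rw [← hmean, Nat.factorial_succ]
          push_cast
          congr 1
          field_simp
          ring

end SignPolytope

section VolumeComparison

open MeasureTheory

variable {X : Type*} [NormedAddCommGroup X] [NormedSpace ℝ X]
variable {ι : Type*} [Fintype ι]

section Duality

variable [DecidableEq ι]

/-- The space `X` has the property that the first-order Walsh coefficients of functions from the
signs into its unit ball have norms adding up to at most `R`. By duality, the Rademacher sums of
functionals in the dual unit ball then have mean norm at most `R`. -/
def HasRademacherCoeffBound (ι X : Type*) [Fintype ι] [DecidableEq ι] [NormedAddCommGroup X]
    [NormedSpace ℝ X] (R : ℝ) : Prop :=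
  ∀ x : (ι → Bool) → X, (∀ s, ‖x s‖ ≤ 1) → ∑ k, ‖rademacherCoeff x k‖ ≤ R

lemma HasRademacherCoeffBound.nonneg {R : ℝ} (hR : HasRademacherCoeffBound ι X R) : 0 ≤ R :=
  (Finset.sum_nonneg fun _ _ => norm_nonneg _).trans (hR 0 fun _ => by simp)

lemma hasRademacherCoeffBound_card : HasRademacherCoeffBound ι X (Fintype.card ι) := by
  intro x hx
  calc ∑ k, ‖rademacherCoeff x k‖ ≤ Fintype.card ι * 𝔼 s, ‖x s‖ := sum_norm_rademacherCoeff_le x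
    _ ≤ Fintype.card ι * 𝔼 _s : ι → Bool, 1 := by
        gcongr with s
        exact hx s
    _ = Fintype.card ι := by rw [Fintype.expect_const, mul_one]

lemma exists_norm_sub_le_apply (l : StrongDual ℝ X) {δ : ℝ} (hδ : 0 < δ) :
    ∃ x : X, ‖x‖ ≤ 1 ∧ ‖l‖ - δ ≤ l x := by
  obtain ⟨x, hx, hlx⟩ := l.exists_lt_apply_of_lt_opNorm (sub_lt_self _ hδ)
  rcases abs_choice (l x) with h | h <;> rw [Real.norm_eq_abs, h] at hlx
  · exact ⟨x, hx.le, hlx.le⟩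
  · exact ⟨-x, by rw [norm_neg]; exact hx.le, by rw [map_neg]; exact hlx.le⟩

lemma HasRademacherCoeffBound.expect_norm_rademacherSum_le {R : ℝ}
    (hR : HasRademacherCoeffBound ι X R) {l : ι → StrongDual ℝ X} (hl : ∀ k, ‖l k‖ ≤ 1) :
    𝔼 s, ‖rademacherSum l s‖ ≤ R := by
  refine le_of_forall_pos_le_add fun δ hδ => sub_le_iff_le_add.1 ?_
  choose x hx hlx using fun s => exists_norm_sub_le_apply (rademacherSum l s) hδ
  calc 𝔼 s, ‖rademacherSum l s‖ - δ = 𝔼 s, (‖rademacherSum l s‖ - δ) := by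
        rw [Finset.expect_sub_distrib, Fintype.expect_const]
    _ ≤ 𝔼 s, rademacherSum l s (x s) := Finset.expect_le_expect fun s _ => hlx s
    _ = ∑ k, l k (rademacherCoeff x k) :=
        (sum_apply_rademacherCoeff (topDualPairing ℝ X) l x).symm
    _ ≤ ∑ k, ‖rademacherCoeff x k‖ := Finset.sum_le_sum fun k _ =>
        (le_abs_self _).trans (by simpa using (l k).le_of_opNorm_le (hl k) (rademacherCoeff x k))
    _ ≤ R := hR x hx

end Duality

lemma apply_mem_signPolytope (l : ι → StrongDual ℝ X) {x : X} {ε : ℝ} (hx : ‖x‖ ≤ ε) :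
    (fun k => l k x) ∈ signPolytope fun s => ε * ‖rademacherSum l s‖ := fun s => by
  calc rademacherSum (fun k => l k x) s = rademacherSum l s x := by
        simp [rademacherSum]
    _ ≤ ‖rademacherSum l s‖ * ‖x‖ := (le_abs_self _).trans ((rademacherSum l s).le_opNorm x)
    _ ≤ ε * ‖rademacherSum l s‖ := by
        rw [mul_comm]
        gcongr

lemma volume_sum_abs_lt_one : volume {a : ι → ℝ | ∑ k, |a k| < 1} =
    ENNReal.ofReal (2 ^ Fintype.card ι / (Fintype.card ι).factorial) := by
  have h := volume_sum_rpow_lt_one ι le_rfl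
  simp only [Real.rpow_one, div_one, Real.Gamma_nat_eq_factorial, one_add_one_eq_two,
    Real.Gamma_two, mul_one] at h
  exact h

/-- The matrix `l j (f k)` of values of functionals at vectors. -/
def evalMatrix (l : ι → StrongDual ℝ X) (f : ι → X) : Matrix ι ι ℝ := Matrix.of fun j k => l j (f k)

lemma evalMatrix_toLin'_apply [DecidableEq ι] (l : ι → StrongDual ℝ X) (f : ι → X) (a : ι → ℝ) :
    (evalMatrix l f).toLin' a = fun j => l j (∑ k, a k • f k) := by
  ext j
  simp [evalMatrix, Matrix.mulVec, dotProduct, mul_comm]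

variable {K : Set X} {n : ℕ} {f : Fin n → X} {l : Fin n → StrongDual ℝ X}
  {σ : Type*} {c : σ → X} {ε : ℝ}

lemma evalMatrix_image_subset_of_cover (hf : ∀ k, f k ∈ K)
    (hc : symConvexHull K ⊆ ⋃ i, Metric.closedBall (c i) ε) :
    (evalMatrix l f).toLin' '' {a | ∑ k, |a k| < 1} ⊆
      ⋃ i, (fun y => -(fun k => l k (c i)) + y) ⁻¹'
        signPolytope fun s => ε * ‖rademacherSum l s‖ := by
  rintro _ ⟨a, ha, rfl⟩
  have hmem : ∑ k, a k • f k ∈ symConvexHull K := subset_closure ⟨n, a, f, hf, ha.le, rfl⟩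
  obtain ⟨i, hi⟩ := Set.mem_iUnion.1 (hc hmem)
  have hshift : -(fun k => l k (c i)) + (evalMatrix l f).toLin' a =
      fun k => l k (∑ j, a j • f j - c i) := by
    ext k
    rw [evalMatrix_toLin'_apply, Pi.add_apply, Pi.neg_apply, map_sub, neg_add_eq_sub]
  refine Set.mem_iUnion.2 ⟨i, ?_⟩
  rw [Set.mem_preimage, hshift]
  exact apply_mem_signPolytope l (mem_closedBall_iff_norm.1 hi)

lemma HasRademacherCoeffBound.abs_det_evalMatrix_le_of_cover [Fintype σ] {R : ℝ}
    (hR : HasRademacherCoeffBound (Fin n) X R) (hf : ∀ k, f k ∈ K) (hl : ∀ k, ‖l k‖ ≤ 1)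
    (hε : 0 ≤ ε) (hc : symConvexHull K ⊆ ⋃ i, Metric.closedBall (c i) ε) :
    |(evalMatrix l f).det| ≤ Fintype.card σ * (R * ε) ^ n := by
  have hmean0 : 0 ≤ 𝔼 s, ε * ‖rademacherSum l s‖ := Finset.expect_nonneg fun _ _ => by positivity
  have hmean : 𝔼 s, ε * ‖rademacherSum l s‖ ≤ R * ε := by
    rw [← Finset.mul_expect, mul_comm R]
    exact mul_le_mul_of_nonneg_left (hR.expect_norm_rademacherSum_le hl) hε
  have hRε : 0 ≤ R * ε := mul_nonneg hR.nonneg hε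
  have hvol : ENNReal.ofReal (|(evalMatrix l f).det| * (2 ^ n / n.factorial)) ≤
      ENNReal.ofReal (Fintype.card σ * ((2 * (R * ε)) ^ n / n.factorial)) := by
    calc ENNReal.ofReal (|(evalMatrix l f).det| * (2 ^ n / n.factorial))
        = volume ((evalMatrix l f).toLin' '' {a | ∑ k, |a k| < 1}) := by
          rw [Measure.addHaar_image_linearMap, LinearMap.det_toLin', volume_sum_abs_lt_one,
            Fintype.card_fin, ENNReal.ofReal_mul (abs_nonneg _)]
      _ ≤ ∑ i, volume ((fun y => -(fun k => l k (c i)) + y) ⁻¹'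
            signPolytope fun s => ε * ‖rademacherSum l s‖) :=
          (measure_mono (evalMatrix_image_subset_of_cover hf hc)).trans
            (measure_iUnion_fintype_le _ _)
      _ = Fintype.card σ * volume (signPolytope fun s => ε * ‖rademacherSum l s‖) := by
          simp only [measure_preimage_add, Finset.sum_const, Finset.card_univ, nsmul_eq_mul]
      _ ≤ Fintype.card σ * ENNReal.ofReal ((2 * (R * ε)) ^ n / n.factorial) := by
          gcongr
          exact (volume_signPolytope_le _ hmean0).trans (by gcongr)
      _ = ENNReal.ofReal (Fintype.card σ * ((2 * (R * ε)) ^ n / n.factorial)) := by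
          rw [ENNReal.ofReal_mul (Nat.cast_nonneg _), ENNReal.ofReal_natCast]
  rw [ENNReal.ofReal_le_ofReal_iff (by positivity)] at hvol
  refine le_of_mul_le_mul_right (hvol.trans_eq ?_)
    (show (0 : ℝ) < 2 ^ n / n.factorial by positivity)
  rw [mul_pow]
  ring

end VolumeComparison

section Entropy

variable {X : Type*} [NormedAddCommGroup X] {K : Set X} {n : ℕ}

lemma entropyNumber_nonneg (n : ℕ) (K : Set X) : 0 ≤ entropyNumber n K :=
  Real.sInf_nonneg fun _ h => h.1.le

lemma exists_cover_of_entropyNumber_lt (hK : Bornology.IsBounded K) {ε : ℝ}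
    (hε : entropyNumber n K < ε) :
    ∃ c : Fin (2 ^ n) → X, K ⊆ ⋃ i, Metric.closedBall (c i) ε := by
  obtain ⟨r, hr, hKr⟩ := hK.exists_pos_norm_le
  have hne : {ε : ℝ | 0 < ε ∧ ∃ c : Fin (2 ^ n) → X, K ⊆ ⋃ i, Metric.closedBall (c i) ε}.Nonempty :=
    ⟨r, hr, 0, fun x hx => Set.mem_iUnion.2 ⟨0, mem_closedBall_zero_iff.2 (hKr x hx)⟩⟩
  obtain ⟨δ, ⟨-, c, hc⟩, hδ⟩ := exists_lt_of_csInf_lt hne hε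
  exact ⟨c, hc.trans (Set.iUnion_mono fun i => Metric.closedBall_subset_closedBall hδ.le)⟩

variable [NormedSpace ℝ X]

lemma isBounded_symConvexHull (hK : Bornology.IsBounded K) :
    Bornology.IsBounded (symConvexHull K) := by
  obtain ⟨r, hr, hKr⟩ := hK.exists_pos_norm_le
  refine Metric.isBounded_closedBall.subset (closure_minimal (t := Metric.closedBall 0 r) ?_
    Metric.isClosed_closedBall)
  rintro _ ⟨m, c, g, hg, hc, rfl⟩
  rw [mem_closedBall_zero_iff]
  calc ‖∑ i, c i • g i‖ ≤ ∑ i, |c i| * r := by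
        refine norm_sum_le_of_le _ fun i _ => ?_
        rw [norm_smul, Real.norm_eq_abs]
        gcongr
        exact hKr _ (hg i)
    _ ≤ r := by
        rw [← Finset.sum_mul]
        exact mul_le_of_le_one_left hr.le hc

lemma HasRademacherCoeffBound.abs_det_evalMatrix_le {R : ℝ}
    (hR : HasRademacherCoeffBound (Fin n) X R) (hK : Bornology.IsBounded K) {f : Fin n → X}
    (hf : ∀ k, f k ∈ K) {l : Fin n → StrongDual ℝ X} (hl : ∀ k, ‖l k‖ ≤ 1) :
    |(evalMatrix l f).det| ≤ (2 * R * entropyNumber n (symConvexHull K)) ^ n := by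
  set e := entropyNumber n (symConvexHull K)
  have hlim : Filter.Tendsto (fun ε => (2 * R * ε) ^ n) (nhdsWithin e (Set.Ioi e))
      (nhds ((2 * R * e) ^ n)) :=
    (Continuous.tendsto (by fun_prop) e).mono_left nhdsWithin_le_nhds
  refine ge_of_tendsto hlim (Filter.eventually_of_mem self_mem_nhdsWithin fun ε hε => ?_)
  obtain ⟨c, hc⟩ := exists_cover_of_entropyNumber_lt (isBounded_symConvexHull hK) hε
  refine (hR.abs_det_evalMatrix_le_of_cover hf hl
    ((entropyNumber_nonneg _ _).trans (le_of_lt hε)) hc).trans_eq ?_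
  rw [Fintype.card_fin, mul_assoc, mul_pow 2]
  push_cast
  rfl

end Entropy

section Greedy

variable {X : Type*} [NormedAddCommGroup X] [NormedSpace ℝ X] {K : Set X} {γ R : ℝ} {f : ℕ → X}
  {n : ℕ}

lemma exists_dual_apply_eq_infDist (S : Submodule ℝ X) (x : X) :
    ∃ l : StrongDual ℝ X, ‖l‖ ≤ 1 ∧ (∀ y ∈ S, l y = 0) ∧ l x = Metric.infDist x S := by
  obtain ⟨g, hg, hgx⟩ := exists_dual_vector'' ℝ (S.mkQ x)
  refine ⟨(g.toLinearMap ∘ₗ S.mkQ).mkContinuous 1 fun y => ?_,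
    LinearMap.mkContinuous_norm_le _ zero_le_one _, fun y hy => ?_, ?_⟩
  · calc ‖g (S.mkQ y)‖ ≤ 1 * ‖S.mkQ y‖ := g.le_of_opNorm_le hg _
      _ ≤ 1 * ‖y‖ := by
          gcongr
          exact Submodule.Quotient.norm_mk_le S y
  · have hy0 : S.mkQ y = 0 := (Submodule.Quotient.mk_eq_zero S).2 hy
    simp [hy0]
  · exact hgx.trans (QuotientAddGroup.norm_mk (S := S.toAddSubgroup) x)

lemma HasRademacherCoeffBound.prod_infDist_spanFirst_le
    (hR : HasRademacherCoeffBound (Fin n) X R) (hK : Bornology.IsBounded K)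
    (hf : ∀ k, f k ∈ K) :
    ∏ k : Fin n, Metric.infDist (f k) (spanFirst f k) ≤
      (2 * R * entropyNumber n (symConvexHull K)) ^ n := by
  choose l hl hl0 hlf using fun k : Fin n => exists_dual_apply_eq_infDist (spanFirst f k) (f k)
  have htri : (evalMatrix l fun k => f k).IsUpperTriangular := fun j k hkj =>
    hl0 j _ (Submodule.subset_span ⟨k, hkj, rfl⟩)
  calc ∏ k : Fin n, Metric.infDist (f k) (spanFirst f k) = (evalMatrix l fun k => f k).det := by
        rw [Matrix.det_of_isUpperTriangular htri]
        simp only [evalMatrix, Matrix.of_apply, hlf]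
    _ ≤ |(evalMatrix l fun k => f k).det| := le_abs_self _
    _ ≤ (2 * R * entropyNumber n (symConvexHull K)) ^ n :=
        hR.abs_det_evalMatrix_le hK (fun k => hf k) hl

lemma greedyError_nonneg (K : Set X) (f : ℕ → X) (n : ℕ) : 0 ≤ greedyError K f n :=
  Real.sSup_nonneg (by rintro _ ⟨g, -, rfl⟩; exact Metric.infDist_nonneg)

lemma spanFirst_mono (f : ℕ → X) : Monotone (spanFirst f) := fun _ _ hkn =>
  Submodule.span_mono (Set.image_mono fun _ hi => lt_of_lt_of_le hi hkn)

lemma IsWeakGreedy.mul_greedyError_le (hf : IsWeakGreedy γ K f) (hγ : 0 < γ) {k : ℕ}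
    (hkn : k ≤ n) : γ * greedyError K f n ≤ Metric.infDist (f k) (spanFirst f k) := by
  rw [← le_div_iff₀' hγ]
  refine csSup_le ⟨_, f 0, (hf 0).1, rfl⟩ ?_
  rintro _ ⟨g, hg, rfl⟩
  rw [le_div_iff₀' hγ]
  refine le_trans ?_ ((hf k).2 g hg)
  gcongr
  exact Metric.infDist_le_infDist_of_subset (spanFirst_mono f hkn) ⟨0, Submodule.zero_mem _⟩

theorem IsWeakGreedy.greedyError_le_entropyNumber (hf : IsWeakGreedy γ K f) (hγ : 0 < γ)
    (hK : Bornology.IsBounded K) (hn : n ≠ 0) (hR : HasRademacherCoeffBound (Fin n) X R) :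
    greedyError K f n ≤ 2 * γ⁻¹ * R * entropyNumber n (symConvexHull K) := by
  have hbound : 0 ≤ 2 * R * entropyNumber n (symConvexHull K) :=
    mul_nonneg (mul_nonneg zero_le_two hR.nonneg) (entropyNumber_nonneg _ _)
  have hpow : (γ * greedyError K f n) ^ n ≤
      (2 * R * entropyNumber n (symConvexHull K)) ^ n := by
    calc (γ * greedyError K f n) ^ n = ∏ _k : Fin n, γ * greedyError K f n := by simp
      _ ≤ ∏ k : Fin n, Metric.infDist (f k) (spanFirst f k) :=
          Finset.prod_le_prod (fun _ _ => mul_nonneg hγ.le (greedyError_nonneg K f n))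
            fun k _ => hf.mul_greedyError_le hγ k.is_lt.le
      _ ≤ (2 * R * entropyNumber n (symConvexHull K)) ^ n :=
          hR.prod_infDist_spanFirst_le hK fun k => (hf k).1
  calc greedyError K f n ≤ γ⁻¹ * (2 * R * entropyNumber n (symConvexHull K)) :=
        (le_inv_mul_iff₀ hγ).2 (le_of_pow_le_pow_left₀ hn hbound hpow)
    _ = 2 * γ⁻¹ * R * entropyNumber n (symConvexHull K) := by ring

end Greedy

section Lp

open MeasureTheory

variable {ι : Type*} [Fintype ι] [DecidableEq ι]

lemma hasRademacherCoeffBound_of_rpow_le {X : Type*} [NormedAddCommGroup X] [NormedSpace ℝ X]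
    {r A : ℝ} (hr : 1 ≤ r) (hA : 0 ≤ A)
    (h : ∀ x : (ι → Bool) → X, ∑ k, ‖rademacherCoeff x k‖ ^ r ≤ A * 𝔼 s, ‖x s‖ ^ r) :
    HasRademacherCoeffBound ι X (((Fintype.card ι : ℝ) ^ (r - 1) * A) ^ (1 / r)) := by
  intro x hx
  have hsum : 0 ≤ ∑ k, ‖rademacherCoeff x k‖ := Finset.sum_nonneg fun _ _ => norm_nonneg _
  rw [one_div, Real.le_rpow_inv_iff_of_pos hsum (by positivity) (by linarith)]
  calc (∑ k, ‖rademacherCoeff x k‖) ^ r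
      ≤ (Fintype.card ι : ℝ) ^ (r - 1) * ∑ k, ‖rademacherCoeff x k‖ ^ r := by
        simpa using Real.rpow_sum_le_const_mul_sum_rpow_of_nonneg Finset.univ hr
          fun k _ => norm_nonneg (rademacherCoeff x k)
    _ ≤ (Fintype.card ι : ℝ) ^ (r - 1) * A := by
        gcongr
        refine (h x).trans (mul_le_of_le_one_right hA ?_)
        calc 𝔼 s, ‖x s‖ ^ r ≤ 𝔼 _s : ι → Bool, 1 := Finset.expect_le_expect fun s _ =>
              Real.rpow_le_one (norm_nonneg _) (hx s) (by linarith)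
          _ = 1 := Fintype.expect_const 1

variable {Ω : Type*} [MeasurableSpace Ω] {μ : Measure Ω} {p : ℝ≥0∞}

lemma rademacherCoeff_coeFn_ae {E : Type*} [NormedAddCommGroup E] [NormedSpace ℝ E]
    (x : (ι → Bool) → Lp E p μ) :
    ∀ᵐ ω ∂μ, ∀ k, rademacherCoeff x k ω = rademacherCoeff (fun s => x s ω) k := by
  refine ae_all_iff.2 fun k => ?_
  have hterm : ∀ᵐ ω ∂μ, ∀ s, (rademacher k s • x s : Lp E p μ) ω = rademacher k s • x s ω :=
    ae_all_iff.2 fun s => Lp.coeFn_smul _ _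
  filter_upwards [hterm, Lp.coeFn_smul (Fintype.card (ι → Bool) : ℝ)⁻¹
    (∑ s, rademacher k s • x s), Lp.coeFn_finsetSum Finset.univ fun s => rademacher k s • x s]
    with ω hterm hsmul hsum
  rw [rademacherCoeff, hsmul, Pi.smul_apply, hsum, Finset.sum_apply]
  simp only [hterm, rademacherCoeff]

lemma Lp_norm_rpow_eq_integral {E : Type*} [NormedAddCommGroup E] (hp0 : p ≠ 0) (hp : p ≠ ∞)
    (x : Lp E p μ) : ‖x‖ ^ p.toReal = ∫ ω, ‖x ω‖ ^ p.toReal ∂μ := by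
  rw [Lp.norm_def, toReal_eLpNorm (Lp.aestronglyMeasurable x),
    lpNorm_eq_integral_norm_rpow_toReal hp0 hp (Lp.aestronglyMeasurable x),
    Real.rpow_inv_rpow (integral_nonneg fun ω => by positivity) (ENNReal.toReal_pos hp0 hp).ne']

variable [Fact (1 ≤ p)]

lemma sum_norm_rademacherCoeff_rpow_le_of_pointwise {E : Type*} [NormedAddCommGroup E]
    [NormedSpace ℝ E] (hp : p ≠ ∞) {A : ℝ}
    (hpoint : ∀ x : (ι → Bool) → E,
      ∑ k, ‖rademacherCoeff x k‖ ^ p.toReal ≤ A * 𝔼 s, ‖x s‖ ^ p.toReal)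
    (x : (ι → Bool) → Lp E p μ) :
    ∑ k, ‖rademacherCoeff x k‖ ^ p.toReal ≤ A * 𝔼 s, ‖x s‖ ^ p.toReal := by
  have hp0 : p ≠ 0 := (zero_lt_one.trans_le Fact.out).ne'
  have hint (y : Lp E p μ) : Integrable (fun ω => ‖y ω‖ ^ p.toReal) μ :=
    (Lp.memLp y).integrable_norm_rpow hp0 hp
  simp only [Fintype.expect_eq_sum_div_card] at hpoint ⊢
  calc ∑ k, ‖rademacherCoeff x k‖ ^ p.toReal
      = ∫ ω, ∑ k, ‖rademacherCoeff x k ω‖ ^ p.toReal ∂μ := by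
        rw [integral_finsetSum _ fun k _ => hint _]
        simp only [Lp_norm_rpow_eq_integral hp0 hp]
    _ ≤ ∫ ω, A * ((∑ s, ‖x s ω‖ ^ p.toReal) / Fintype.card (ι → Bool)) ∂μ := by
        refine integral_mono_ae (integrable_finsetSum _ fun k _ => hint _)
          (((integrable_finsetSum _ fun s _ => hint _).div_const _).const_mul _) ?_
        filter_upwards [rademacherCoeff_coeFn_ae x] with ω hω
        simp only [hω]
        exact hpoint _
    _ = A * ((∑ s, ‖x s‖ ^ p.toReal) / Fintype.card (ι → Bool)) := by
        rw [integral_const_mul, integral_div, integral_finsetSum _ fun s _ => hint _]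
        simp only [Lp_norm_rpow_eq_integral hp0 hp]

lemma hasRademacherCoeffBound_Lp_of_le_two (hp : p ≤ 2) :
    HasRademacherCoeffBound ι (Lp ℝ p μ) ((Fintype.card ι : ℝ) ^ (1 / p).toReal) := by
  have hptop : p ≠ ∞ := ne_top_of_le_ne_top ENNReal.ofNat_ne_top hp
  have hr1 : 1 ≤ p.toReal := ENNReal.toReal_mono hptop (Fact.out : 1 ≤ p)
  have hr2 : p.toReal ≤ 2 := ENNReal.toReal_mono ENNReal.ofNat_ne_top hp
  convert hasRademacherCoeffBound_of_rpow_le (X := Lp ℝ p μ) hr1 (by positivity)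
    (sum_norm_rademacherCoeff_rpow_le_of_pointwise (ι := ι) hptop
      (sum_abs_rademacherCoeff_rpow_le_of_le_two hr1 hr2)) using 1
  rw [← Real.rpow_add_of_nonneg (Nat.cast_nonneg _) (by linarith) (by linarith),
    show p.toReal - 1 + (2 - p.toReal) = 1 by ring, Real.rpow_one, ENNReal.toReal_div,
    ENNReal.toReal_one]

lemma hasRademacherCoeffBound_Lp_of_two_le (hp : 2 ≤ p) :
    HasRademacherCoeffBound ι (Lp ℝ p μ) ((Fintype.card ι : ℝ) ^ (1 - (1 / p).toReal)) := by
  rcases eq_or_ne p ∞ with rfl | hptop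
  · simpa using hasRademacherCoeffBound_card (ι := ι) (X := Lp ℝ ∞ μ)
  have hr : 2 ≤ p.toReal := ENNReal.toReal_mono hptop hp
  convert hasRademacherCoeffBound_of_rpow_le (X := Lp ℝ p μ) (by linarith) zero_le_one
    (sum_norm_rademacherCoeff_rpow_le_of_pointwise (ι := ι) hptop
      (by simpa using sum_abs_rademacherCoeff_rpow_le_of_two_le hr)) using 1
  rw [mul_one, ← Real.rpow_mul (Nat.cast_nonneg _), mul_one_div, sub_div, div_self (by linarith),
    ENNReal.toReal_div, ENNReal.toReal_one]

theorem hasRademacherCoeffBound_Lp : HasRademacherCoeffBound ι (Lp ℝ p μ)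
    ((Fintype.card ι : ℝ) ^ ((1 / 2 : ℝ) + |1 / 2 - (1 / p).toReal|)) := by
  have hinv_top {q : ℝ≥0∞} (hq : 1 ≤ q) : 1 / q ≠ ∞ := by
    simpa using (zero_lt_one.trans_le hq).ne'
  rcases le_total p 2 with hp | hp
  · have hinv : 1 / 2 ≤ (1 / p).toReal := by
      simpa using ENNReal.toReal_mono (hinv_top Fact.out) (ENNReal.div_le_div_left hp 1)
    convert hasRademacherCoeffBound_Lp_of_le_two (ι := ι) (μ := μ) hp using 2
    rw [abs_of_nonpos (by linarith)]
    ring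
  · have hinv : (1 / p).toReal ≤ 1 / 2 := by
      simpa using ENNReal.toReal_mono (hinv_top one_le_two) (ENNReal.div_le_div_left hp 1)
    convert hasRademacherCoeffBound_Lp_of_two_le (ι := ι) (μ := μ) hp using 2
    rw [abs_of_nonneg (by linarith)]
    ring

end Lp

open MeasureTheory in
theorem weakGreedy_error_le_entropy_Lp_general {Ω : Type*} [MeasurableSpace Ω] {μ : Measure Ω}
    {p : ℝ≥0∞} [Fact (1 ≤ p)] {K : Set (Lp ℝ p μ)} (hK : Bornology.IsBounded K) {γ : ℝ}
    (hγ : 0 < γ) {f : ℕ → Lp ℝ p μ} (hf : IsWeakGreedy γ K f) {n : ℕ} (hn : 1 ≤ n) :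
    greedyError K f n ≤ 2 * γ⁻¹ * (n : ℝ) ^ ((1 / 2 : ℝ) + |1 / 2 - (1 / p).toReal|) *
      entropyNumber n (symConvexHull K) := by
  have hR := hasRademacherCoeffBound_Lp (ι := Fin n) (μ := μ) (p := p)
  rw [Fintype.card_fin] at hR
  exact hf.greedyError_le_entropyNumber hγ hK (Nat.one_le_iff_ne_zero.1 hn) hR

open MeasureTheory in
/-- there is an absolute constant `C` with
`σ_n(K) ≤ C γ⁻¹ n^{1/2 + |1/2 - 1/p|} ε_n(co(K))` for the weak greedy algorithm in `L_p(μ)`. -/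
theorem weakGreedy_error_le_entropy_Lp :
    ∃ C : ℝ, 0 < C ∧
      ∀ (Ω : Type) (_ : MeasurableSpace Ω) (μ : Measure Ω) (p : ℝ≥0∞) (_ : Fact (1 ≤ p))
        (K : Set (Lp ℝ p μ)), IsCompact K →
        ∀ γ : ℝ, γ ∈ Set.Ioc (0 : ℝ) 1 →
        ∀ f : ℕ → Lp ℝ p μ, IsWeakGreedy γ K f →
        ∀ n : ℕ, 1 ≤ n →
          greedyError K f n
            ≤ C * γ⁻¹ * (n : ℝ) ^ ((1 / 2 : ℝ) + |1 / 2 - (1 / p).toReal|) *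
                entropyNumber n (symConvexHull K) := by
  exact ⟨2, two_pos, fun _ _ _ _ _ _ hK _ hγ _ hf _ hn =>
    weakGreedy_error_le_entropy_Lp_general hK.isBounded hγ.1 hf hn⟩
end

section
/- Fix α > 1 and p ∈ [1,∞]. Define x_j = 2^{−kα} whenever 2^{k−1} ≤ j ≤ 2^k − 1 (k ≥ 1), and let K = co({x_j e_j : j ≥ 1}) ⊂ ℓ_p where e_j is the j-th coordinate unit vector. Then there exists a constant C = C(α,p) such that ε_n(K)_{ℓ_p} ≤ C n^{−α − 1 + 1/p} for all n ≥ 1. -/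
open scoped RealInnerProductSpace ENNReal

/-!
`K` lies in the weighted `ℓ¹` ball `∑ |y j| j ^ α ≤ 1`. Round every coordinate to the nearest
multiple of `δ = s ^ (-α - 1)`. The error is at most `δ` in the sup norm, and at most `2 s ^ (-α)`
in `ℓ¹`: each of the first `s` coordinates contributes at most `δ`, and the later ones have total
mass at most `s ^ (-α)`. Interpolation gives an `ℓ_p` error of at most `2 s ^ (-α - 1 + 1 / p)`.

The integer vectors `m` produced by the rounding satisfy `∑ |m j| (j / s) ^ α ≤ 2 s`. Rankin's
trick bounds their number by `exp (2 s) ∏ coth ((j / s) ^ α / 2)`, where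
`coth (v / 2) = 1 + 2 / (exp v - 1)`. As `log coth (t ^ α / 2)` is integrable on `(0, ∞)`, this is
`exp (O(s))`, so `s` may be taken to be a constant multiple of `n`.
-/

theorem hasSum_exp_neg_abs_mul {v : ℝ} (hv : 0 < v) :
    HasSum (fun a : ℤ => Real.exp (-(|(a : ℝ)| * v))) (1 + 2 / (Real.exp v - 1)) := by
  have hexp : 1 < Real.exp v := Real.one_lt_exp_iff.2 hv
  have hgeom : HasSum (fun n : ℕ => Real.exp (-((n + 1) * v))) (1 / (Real.exp v - 1)) := by
    have h := (hasSum_geometric_of_lt_one (Real.exp_pos (-v)).le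
      (Real.exp_lt_one_iff.2 (neg_neg_of_pos hv))).mul_left (Real.exp (-v))
    have hlim : Real.exp (-v) * (1 - Real.exp (-v))⁻¹ = 1 / (Real.exp v - 1) := by
      rw [Real.exp_neg]
      have : Real.exp v - 1 ≠ 0 := by linarith
      field_simp
    rw [hlim] at h
    refine h.congr_fun fun n => ?_
    rw [← Real.exp_nat_mul, ← Real.exp_add]
    congr 1
    ring
  have habs (n : ℕ) : |(n : ℝ) + 1| = n + 1 := abs_of_nonneg (by positivity)
  have h := HasSum.of_add_one_of_neg_add_one (f := fun a : ℤ => Real.exp (-(|(a : ℝ)| * v)))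
    (by simpa only [Int.cast_add, Int.cast_natCast, Int.cast_one, habs] using hgeom)
    (by simpa only [Int.cast_neg, Int.cast_add, Int.cast_natCast, Int.cast_one, abs_neg, habs]
      using hgeom)
  have hzero : Real.exp (-(|((0 : ℤ) : ℝ)| * v)) = 1 := by simp
  convert h using 1
  rw [hzero]
  ring

-- Rankin's trick: every `m ∈ T` has `1 ≤ exp (r - ∑ i, |m i| * w i)`, and this weight factors.
theorem card_le_exp_mul_prod_of_sum_abs_mul_le {ι : Type*} [Fintype ι] {w : ι → ℝ}
    (hw : ∀ i, 0 < w i) {r : ℝ} {T : Finset (ι → ℤ)}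
    (hT : ∀ m ∈ T, ∑ i, |(m i : ℝ)| * w i ≤ r) :
    (T.card : ℝ) ≤ Real.exp r * ∏ i, (1 + 2 / (Real.exp (w i) - 1)) := by
  classical
  set A : ι → Finset ℤ := fun i => T.image (· i)
  have hTA : T ⊆ Fintype.piFinset A := fun m hm =>
    Fintype.mem_piFinset.2 fun i => Finset.mem_image_of_mem (· i) hm
  calc (T.card : ℝ) = ∑ m ∈ T, 1 := by simp
    _ ≤ ∑ m ∈ T, Real.exp r * ∏ i, Real.exp (-(|(m i : ℝ)| * w i)) := by
      refine Finset.sum_le_sum fun m hm => ?_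
      rw [← Real.exp_sum, ← Real.exp_add, Real.one_le_exp_iff, Finset.sum_neg_distrib]
      linarith [hT m hm]
    _ ≤ ∑ m ∈ Fintype.piFinset A, Real.exp r * ∏ i, Real.exp (-(|(m i : ℝ)| * w i)) :=
      Finset.sum_le_sum_of_subset_of_nonneg hTA fun _ _ _ => by positivity
    _ = Real.exp r * ∏ i, ∑ a ∈ A i, Real.exp (-(|(a : ℝ)| * w i)) := by
      rw [← Finset.mul_sum, Finset.prod_univ_sum]
    _ ≤ Real.exp r * ∏ i, (1 + 2 / (Real.exp (w i) - 1)) := by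
      gcongr with i
      exact sum_le_hasSum _ (fun _ _ => by positivity) (hasSum_exp_neg_abs_mul (hw i))

theorem encard_le_of_forall_finset_card_le {β : Type*} {s : Set β} {N : ℕ}
    (h : ∀ T : Finset β, (T : Set β) ⊆ s → T.card ≤ N) : s.encard ≤ N := by
  by_contra! hlt
  obtain ⟨t, hts, ht⟩ := Set.exists_subset_encard_eq (Order.add_one_le_of_lt hlt)
  have htfin : t.Finite := Set.finite_of_encard_eq_coe (k := N + 1) (by simpa using ht)
  have hcard := h htfin.toFinset (by simpa using hts)
  rw [htfin.encard_eq_coe_toFinset_card] at ht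
  have : htfin.toFinset.card = N + 1 := by exact_mod_cast ht
  omega

theorem encard_setOf_sum_abs_mul_le {ι : Type*} [Fintype ι] {w : ι → ℝ} (hw : ∀ i, 0 < w i)
    {r : ℝ} {N : ℕ} (hN : Real.exp r * ∏ i, (1 + 2 / (Real.exp (w i) - 1)) ≤ N) :
    {m : ι → ℤ | ∑ i, |(m i : ℝ)| * w i ≤ r}.encard ≤ N :=
  encard_le_of_forall_finset_card_le fun _ hT => by
    exact_mod_cast (card_le_exp_mul_prod_of_sum_abs_mul_le hw hT).trans hN

theorem log_one_add_le_rpow_div {y a : ℝ} (hy : 0 ≤ y) (ha : 0 < a) (ha1 : a ≤ 1) :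
    Real.log (1 + y) ≤ y ^ a / a := by
  rw [le_div_iff₀ ha, mul_comm, ← Real.log_rpow (by positivity)]
  calc Real.log ((1 + y) ^ a) ≤ Real.log (1 + y ^ a) := by
        gcongr
        simpa using Real.rpow_add_le_add_rpow zero_le_one hy ha.le ha1
    _ ≤ y ^ a := by linarith [Real.log_le_sub_one_of_pos (by positivity : 0 < 1 + y ^ a)]

theorem pow_div_factorial_le_exp_sub_one {v : ℝ} (hv : 0 ≤ v) {k : ℕ} (hk : k ≠ 0) :
    v ^ k / k.factorial ≤ Real.exp v - 1 := by
  have h := Real.sum_le_exp_of_nonneg hv (k + 1)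
  rw [Finset.sum_range_succ] at h
  have h0 : 1 ≤ ∑ i ∈ Finset.range k, v ^ i / i.factorial := by
    simpa using Finset.single_le_sum (f := fun i => v ^ i / (i.factorial : ℝ))
      (fun i _ => by positivity) (Finset.mem_range.2 (Nat.pos_of_ne_zero hk))
  linarith

theorem exists_log_one_add_two_div_exp_sub_one_le {β : ℝ} (hβ : 0 < β) :
    ∃ C, 0 < C ∧ ∀ v, 0 < v → Real.log (1 + 2 / (Real.exp v - 1)) ≤ C * v ^ (-β) := by
  set k := ⌈β⌉₊
  have hk : 0 < k := Nat.ceil_pos.2 hβ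
  have ha : 0 < β / k := by positivity
  have ha1 : β / k ≤ 1 := div_le_one_of_le₀ (Nat.le_ceil β) (by positivity)
  refine ⟨(2 * k.factorial) ^ (β / k) / (β / k), by positivity, fun v hv => ?_⟩
  have hexp : 0 < Real.exp v - 1 := sub_pos.2 (Real.one_lt_exp_iff.2 hv)
  have hle : 2 / (Real.exp v - 1) ≤ 2 * k.factorial * v ^ (-k : ℝ) := by
    calc 2 / (Real.exp v - 1) ≤ 2 / (v ^ k / k.factorial) := by
          gcongr
          exact pow_div_factorial_le_exp_sub_one hv.le hk.ne'
      _ = 2 * k.factorial * v ^ (-k : ℝ) := by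
          rw [Real.rpow_neg hv.le, Real.rpow_natCast]
          field_simp
  calc Real.log (1 + 2 / (Real.exp v - 1))
      ≤ (2 / (Real.exp v - 1)) ^ (β / k) / (β / k) :=
        log_one_add_le_rpow_div (by positivity) ha ha1
    _ ≤ (2 * k.factorial * v ^ (-k : ℝ)) ^ (β / k) / (β / k) := by gcongr
    _ = (2 * k.factorial) ^ (β / k) / (β / k) * v ^ (-β) := by
        have hkβ : -(k : ℝ) * (β / k) = -β := by field_simp
        rw [Real.mul_rpow (by positivity) (by positivity), ← Real.rpow_mul hv.le, hkβ]
        ring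

-- The summand is the derivative of the concave function `t ↦ 2√t / (1 + √t)` at `t = j / s`,
-- hence at most `s` times the increment of that function over `[(j - 1) / s, j / s]`.
theorem sum_one_div_sqrt_mul_one_add_sqrt_sq_le {s : ℝ} (hs : 0 < s) (J : ℕ) :
    ∑ j ∈ Finset.Icc 1 J, 1 / (√(j / s) * (1 + √(j / s)) ^ 2) ≤ 2 * s := by
  have hincr (j : ℕ) : 1 / (√((j + 1 : ℕ) / s) * (1 + √((j + 1 : ℕ) / s)) ^ 2) ≤
      2 * s * (√((j + 1 : ℕ) / s) / (1 + √((j + 1 : ℕ) / s))) -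
        2 * s * (√(j / s) / (1 + √(j / s))) := by
    have ha : 0 < √((j + 1 : ℕ) / s) := by positivity
    have hb : 0 ≤ √(j / s) := Real.sqrt_nonneg _
    have hba : √(j / s) ≤ √((j + 1 : ℕ) / s) := by gcongr; omega
    have hsq : s * (√((j + 1 : ℕ) / s) ^ 2 - √(j / s) ^ 2) = 1 := by
      rw [Real.sq_sqrt (by positivity), Real.sq_sqrt (by positivity)]
      push_cast
      field_simp
      ring
    set a := √((j + 1 : ℕ) / s)
    set b := √(j / s)
    have hstep : 1 ≤ 2 * s * (a - b) * a := by
      nlinarith [mul_nonneg hs.le (sq_nonneg (a - b))]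
    calc 1 / (a * (1 + a) ^ 2) ≤ 2 * s * (a - b) * a / (a * (1 + a) ^ 2) := by gcongr
      _ = 2 * s * (a - b) / ((1 + a) * (1 + a)) := by field_simp
      _ ≤ 2 * s * (a - b) / ((1 + a) * (1 + b)) := by
          have := sub_nonneg.2 hba
          gcongr
      _ = 2 * s * (a / (1 + a)) - 2 * s * (b / (1 + b)) := by field_simp; ring
  calc ∑ j ∈ Finset.Icc 1 J, 1 / (√(j / s) * (1 + √(j / s)) ^ 2)
      = ∑ j ∈ Finset.range J, 1 / (√((j + 1 : ℕ) / s) * (1 + √((j + 1 : ℕ) / s)) ^ 2) := by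
        rw [Finset.range_eq_Ico, Finset.sum_Ico_add' (fun j : ℕ =>
          1 / (√(j / s) * (1 + √(j / s)) ^ 2)) 0 J 1]
        rfl
    _ ≤ 2 * s * (√(J / s) / (1 + √(J / s))) := by
        refine (Finset.sum_le_sum fun j _ => hincr j).trans_eq ?_
        rw [Finset.sum_range_sub (fun j : ℕ => 2 * s * (√(j / s) / (1 + √(j / s))))]
        simp
    _ ≤ 2 * s * 1 := by
        gcongr
        exact div_le_one_of_le₀ (by linarith) (by positivity)
    _ = 2 * s := mul_one _

theorem min_one_div_pow_three_le {r : ℝ} (hr : 0 < r) :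
    min (1 / r) (1 / r ^ 3) ≤ 4 * (1 / (r * (1 + r) ^ 2)) := by
  rw [mul_one_div]
  rcases le_total r 1 with h | h
  · have : (1 + r) ^ 2 ≤ 4 := by nlinarith
    refine (min_le_left _ _).trans ?_
    rw [div_le_div_iff₀ hr (by positivity)]
    nlinarith
  · have : (1 + r) ^ 2 ≤ 4 * r ^ 2 := by nlinarith
    refine (min_le_right _ _).trans ?_
    rw [div_le_div_iff₀ (by positivity) (by positivity)]
    nlinarith

theorem exists_log_one_add_two_div_exp_rpow_sub_one_le {α : ℝ} (hα : 0 < α) :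
    ∃ C, 0 < C ∧ ∀ t, 0 < t →
      Real.log (1 + 2 / (Real.exp (t ^ α) - 1)) ≤ C * (1 / (√t * (1 + √t) ^ 2)) := by
  obtain ⟨C₁, hC₁, h₁⟩ :=
    exists_log_one_add_two_div_exp_sub_one_le (by positivity : 0 < 1 / (2 * α))
  obtain ⟨C₂, -, h₂⟩ :=
    exists_log_one_add_two_div_exp_sub_one_le (by positivity : 0 < 3 / (2 * α))
  have hC : 0 < max C₁ C₂ := lt_max_of_lt_left hC₁
  refine ⟨max C₁ C₂ * 4, by positivity, fun t ht => ?_⟩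
  have hr : 0 < √t := Real.sqrt_pos.2 ht
  have hpow (k : ℝ) : (t ^ α) ^ (-(k / (2 * α))) = 1 / √t ^ k := by
    rw [← Real.rpow_mul ht.le, Real.sqrt_eq_rpow, ← Real.rpow_mul ht.le, one_div (t ^ _),
      ← Real.rpow_neg ht.le]
    congr 1
    field_simp
  have hsmall : Real.log (1 + 2 / (Real.exp (t ^ α) - 1)) ≤ max C₁ C₂ * (1 / √t) := calc
    _ ≤ C₁ * (1 / √t) := by simpa only [hpow, Real.rpow_one] using h₁ (t ^ α) (by positivity)
    _ ≤ max C₁ C₂ * (1 / √t) := by gcongr; exact le_max_left _ _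
  have hlarge : Real.log (1 + 2 / (Real.exp (t ^ α) - 1)) ≤ max C₁ C₂ * (1 / √t ^ 3) := calc
    _ ≤ C₂ * (1 / √t ^ 3) := by
      simpa only [hpow, Real.rpow_ofNat] using h₂ (t ^ α) (by positivity)
    _ ≤ max C₁ C₂ * (1 / √t ^ 3) := by gcongr; exact le_max_right _ _
  calc Real.log (1 + 2 / (Real.exp (t ^ α) - 1))
      ≤ max C₁ C₂ * min (1 / √t) (1 / √t ^ 3) := by
        rw [mul_min_of_nonneg _ _ hC.le]
        exact le_min hsmall hlarge
    _ ≤ max C₁ C₂ * (4 * (1 / (√t * (1 + √t) ^ 2))) := by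
        gcongr
        exact min_one_div_pow_three_le hr
    _ = max C₁ C₂ * 4 * (1 / (√t * (1 + √t) ^ 2)) := by rw [mul_assoc]

theorem exists_prod_one_add_two_div_exp_rpow_sub_one_le {α : ℝ} (hα : 0 < α) :
    ∃ C, 0 < C ∧ ∀ s, 0 < s → ∀ J : ℕ,
      ∏ j ∈ Finset.Icc 1 J, (1 + 2 / (Real.exp ((j / s) ^ α) - 1)) ≤ Real.exp (C * s) := by
  obtain ⟨C, hC, hlog⟩ := exists_log_one_add_two_div_exp_rpow_sub_one_le hα
  refine ⟨C * 2, by positivity, fun s hs J => ?_⟩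
  have hpos {j : ℕ} (hj : j ∈ Finset.Icc 1 J) : 0 < (j : ℝ) / s :=
    div_pos (by exact_mod_cast (Finset.mem_Icc.1 hj).1) hs
  calc ∏ j ∈ Finset.Icc 1 J, (1 + 2 / (Real.exp ((j / s) ^ α) - 1))
      ≤ ∏ j ∈ Finset.Icc 1 J, Real.exp (C * (1 / (√(j / s) * (1 + √(j / s)) ^ 2))) := by
        have hfactor {j : ℕ} (hj : j ∈ Finset.Icc 1 J) :
            0 < 1 + 2 / (Real.exp ((j / s) ^ α) - 1) := by
          have := sub_pos.2 (Real.one_lt_exp_iff.2 (Real.rpow_pos_of_pos (hpos hj) α))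
          positivity
        exact Finset.prod_le_prod (fun j hj => (hfactor hj).le) fun j hj =>
          (Real.log_le_iff_le_exp (hfactor hj)).1 (hlog _ (hpos hj))
    _ = Real.exp (C * ∑ j ∈ Finset.Icc 1 J, 1 / (√(j / s) * (1 + √(j / s)) ^ 2)) := by
        rw [← Real.exp_sum, Finset.mul_sum]
    _ ≤ Real.exp (C * (2 * s)) := by
        gcongr
        exact sum_one_div_sqrt_mul_one_add_sqrt_sq_le hs J
    _ = Real.exp (C * 2 * s) := by rw [mul_assoc]

theorem exists_encard_setOf_sum_abs_mul_rpow_le {α : ℝ} (hα : 0 < α) :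
    ∃ γ : ℝ, 0 < γ ∧ ∀ n : ℕ, 1 ≤ n → ∀ J : ℕ,
      {m : Finset.Icc 1 J → ℤ | ∑ j, |(m j : ℝ)| * (j / (γ * n)) ^ α ≤ 2 * (γ * n)}.encard ≤
        (2 ^ n : ℕ) := by
  obtain ⟨C, hC, hprod⟩ := exists_prod_one_add_two_div_exp_rpow_sub_one_le hα
  have hγ : 0 < Real.log 2 / (2 + C) := by positivity
  refine ⟨Real.log 2 / (2 + C), hγ, fun n hn J => ?_⟩
  have hn0 : (0 : ℝ) < n := by exact_mod_cast hn
  set s : ℝ := Real.log 2 / (2 + C) * n with hs_def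
  have hs : 0 < s := mul_pos hγ hn0
  have hweight (j : Finset.Icc 1 J) : 0 < (j / s : ℝ) ^ α := by
    have : 0 < (j : ℝ) := by exact_mod_cast (Finset.mem_Icc.1 j.2).1
    positivity
  refine encard_setOf_sum_abs_mul_le hweight ?_
  rw [Finset.prod_coe_sort (Finset.Icc 1 J) fun j : ℕ => 1 + 2 / (Real.exp ((j / s) ^ α) - 1)]
  calc Real.exp (2 * s) * ∏ j ∈ Finset.Icc 1 J, (1 + 2 / (Real.exp ((j / s) ^ α) - 1))
      ≤ Real.exp (2 * s) * Real.exp (C * s) := by gcongr; exact hprod s hs J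
    _ = Real.exp (Real.log 2 * n) := by
        rw [← Real.exp_add, ← add_mul, hs_def, ← mul_assoc, mul_div_cancel₀ _ (by positivity)]
    _ = (2 ^ n : ℕ) := by
        rw [Real.exp_mul, Real.exp_log two_pos, Real.rpow_natCast, Nat.cast_pow, Nat.cast_ofNat]

theorem lp_norm_le_rpow_mul_rpow {ι : Type*} {E : ι → Type*} [∀ i, NormedAddCommGroup (E i)]
    {p : ℝ≥0∞} [Fact (1 ≤ p)] {A B : ℝ} (hA : 0 ≤ A) (f : lp E p) (hsup : ∀ i, ‖f i‖ ≤ A)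
    (hsum : ∀ S : Finset ι, ∑ i ∈ S, ‖f i‖ ≤ B) :
    ‖f‖ ≤ A ^ (1 - p⁻¹.toReal) * B ^ p⁻¹.toReal := by
  have hB : 0 ≤ B := by simpa using hsum ∅
  rcases eq_or_ne p ∞ with rfl | hp
  · exact lp.norm_le_of_forall_le (by positivity) fun i => by simpa using hsup i
  set q := p.toReal
  have hq : 1 ≤ q := (ENNReal.dichotomy p).resolve_left hp
  have hq0 : 0 < q := by linarith
  rw [ENNReal.toReal_inv]
  refine lp.norm_le_of_forall_sum_le hq0 (by positivity) fun S => ?_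
  calc ∑ i ∈ S, ‖f i‖ ^ q ≤ ∑ i ∈ S, A ^ (q - 1) * ‖f i‖ := by
        refine Finset.sum_le_sum fun i _ => ?_
        rw [← sub_add_cancel q 1, Real.rpow_add_one' (norm_nonneg _) (by linarith),
          sub_add_cancel]
        have : 0 ≤ q - 1 := by linarith
        gcongr
        exact hsup i
    _ ≤ A ^ (q - 1) * B := by rw [← Finset.mul_sum]; gcongr; exact hsum S
    _ = (A ^ (1 - q⁻¹) * B ^ q⁻¹) ^ q := by
        rw [Real.mul_rpow (by positivity) (by positivity), ← Real.rpow_mul hA,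
          Real.rpow_inv_rpow hB hq0.ne', sub_mul, one_mul, inv_mul_cancel₀ hq0.ne']

theorem entropyNumber_le_of_encard_le {X : Type*} [NormedAddCommGroup X] {n : ℕ} {K N : Set X}
    {ε : ℝ} (hε : 0 < ε) (hN : N.encard ≤ (2 ^ n : ℕ)) (hK : ∀ y ∈ K, ∃ c ∈ N, ‖y - c‖ ≤ ε) :
    entropyNumber n K ≤ ε := by
  obtain ⟨hfin, hcard⟩ := Set.encard_le_coe_iff_finite_ncard_le.1 hN
  have := hfin.fintype
  obtain ⟨e⟩ : Nonempty (N ↪ Fin (2 ^ n)) := Function.Embedding.nonempty_of_card_le <| by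
    rwa [Fintype.card_fin, ← Nat.card_eq_fintype_card]
  refine csInf_le ⟨0, fun _ h => h.1.le⟩ ⟨hε, Function.extend e Subtype.val 0, fun y hy => ?_⟩
  obtain ⟨c, hc, hyc⟩ := hK y hy
  refine Set.mem_iUnion.2 ⟨e ⟨c, hc⟩, ?_⟩
  rwa [e.injective.extend_apply, Metric.mem_closedBall, dist_eq_norm]

theorem le_of_mem_symConvexHull {X : Type*} [NormedAddCommGroup X] [NormedSpace ℝ X]
    {q : Seminorm ℝ X} (hq : Continuous q) {K : Set X} {r : ℝ} (hr : 0 ≤ r)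
    (hK : ∀ g ∈ K, q g ≤ r) {y : X} (hy : y ∈ symConvexHull K) : q y ≤ r := by
  refine closure_minimal ?_ (isClosed_le hq continuous_const) hy
  rintro _ ⟨m, c, g, hg, hc, rfl⟩
  calc q (∑ i, c i • g i) ≤ ∑ i, q (c i • g i) :=
        Finset.le_sum_of_subadditive q (map_zero q).le (map_add_le_add q) _ _
    _ = ∑ i, |c i| * q (g i) := by simp only [map_smul_eq_mul, Real.norm_eq_abs]
    _ ≤ ∑ i, |c i| * r := by gcongr with i; exact hK _ (hg i)
    _ = (∑ i, |c i|) * r := by rw [Finset.sum_mul]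
    _ ≤ r := mul_le_of_le_one_left hr hc

/-- The unit ball of the weighted `ℓ¹` space of sequences `(y j)`, `j ≥ 1`, with weights `j ^ α`.
Sequences are indexed by all of `ℕ`, so the coordinate at `0` is required to vanish. -/
def powWeightedBall (α : ℝ) : Set (ℕ → ℝ) :=
  {y | y 0 = 0 ∧ ∀ S : Finset ℕ, ∑ j ∈ S, |y j| * (j : ℝ) ^ α ≤ 1}

/-- The seminorm `∑_{j ∈ S} |y j| j ^ α` on `ℓ_p`: the weighted `ℓ¹` norm of `powWeightedBall`
restricted to finitely many coordinates, which unlike the full norm is continuous on `ℓ_p`. -/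
noncomputable def powWeightedSeminorm (α : ℝ) (p : ℝ≥0∞) (S : Finset ℕ) :
    Seminorm ℝ (lp (fun _ : ℕ => ℝ) p) :=
  .of (fun y => ∑ j ∈ S, |y j| * (j : ℝ) ^ α)
    (fun y z => by
      rw [← Finset.sum_add_distrib]
      gcongr with j
      rw [← add_mul]
      gcongr
      exact abs_add_le _ _)
    (fun c y => by simp [Finset.mul_sum, abs_mul, mul_assoc])

theorem powWeightedSeminorm_apply (α : ℝ) {p : ℝ≥0∞} (S : Finset ℕ)
    (y : lp (fun _ : ℕ => ℝ) p) :
    powWeightedSeminorm α p S y = ∑ j ∈ S, |y j| * (j : ℝ) ^ α := rfl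

theorem continuous_powWeightedSeminorm (α : ℝ) (p : ℝ≥0∞) [Fact (1 ≤ p)] (S : Finset ℕ) :
    Continuous (powWeightedSeminorm α p S) :=
  continuous_finsetSum _ fun j _ =>
    (lp.evalCLM ℝ (fun _ : ℕ => ℝ) p j).continuous.abs.mul_const _

theorem powWeightedSeminorm_single_le (α : ℝ) (p : ℝ≥0∞) (S : Finset ℕ) (j : ℕ) (a : ℝ) :
    powWeightedSeminorm α p S (lp.single p j a) ≤ |a| * (j : ℝ) ^ α := by
  have hterm (i : ℕ) : |lp.single (E := fun _ : ℕ => ℝ) p j a i| * (i : ℝ) ^ α =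
      if i = j then |a| * (j : ℝ) ^ α else 0 := by
    split_ifs with h
    · rw [h, lp.single_apply_self]
    · rw [lp.single_apply_ne (E := fun _ : ℕ => ℝ) p j a h, abs_zero, zero_mul]
  rw [powWeightedSeminorm_apply, Finset.sum_congr rfl fun i _ => hterm i, Finset.sum_ite_eq']
  split_ifs
  · exact le_rfl
  · positivity

theorem coe_mem_powWeightedBall_of_mem_symConvexHull {α : ℝ} {p : ℝ≥0∞} [Fact (1 ≤ p)]
    {x : ℕ → ℝ} (hx : ∀ j : ℕ, 1 ≤ j → |x j| ≤ (j : ℝ) ^ (-α)) {y : lp (fun _ : ℕ => ℝ) p}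
    (hy : y ∈ symConvexHull
      {y : lp (fun _ : ℕ => ℝ) p | ∃ j : ℕ, 1 ≤ j ∧ y = lp.single p j (x j)}) :
    ⇑y ∈ powWeightedBall α := by
  constructor
  · let coordZero := (normSeminorm ℝ ℝ).comp (lp.evalCLM ℝ (fun _ : ℕ => ℝ) p 0).toLinearMap
    have hcoord : Continuous coordZero := (lp.evalCLM ℝ (fun _ : ℕ => ℝ) p 0).continuous.norm
    refine norm_le_zero_iff.1 (le_of_mem_symConvexHull hcoord le_rfl ?_ hy)
    rintro _ ⟨j, hj, rfl⟩
    exact norm_le_zero_iff.2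
      (lp.single_apply_ne (E := fun _ : ℕ => ℝ) p j (x j) (Nat.ne_of_lt hj))
  · refine fun S => le_of_mem_symConvexHull (continuous_powWeightedSeminorm α p S) zero_le_one ?_ hy
    rintro _ ⟨j, hj, rfl⟩
    have hj0 : (0 : ℝ) < j := by exact_mod_cast hj
    calc powWeightedSeminorm α p S (lp.single p j (x j))
        ≤ |x j| * (j : ℝ) ^ α := powWeightedSeminorm_single_le α p S j (x j)
      _ ≤ (j : ℝ) ^ (-α) * (j : ℝ) ^ α := by gcongr; exact hx j hj
      _ = 1 := by rw [← Real.rpow_add hj0, neg_add_cancel, Real.rpow_zero]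

theorem abs_le_rpow_neg_of_mem_powWeightedBall {α : ℝ} {y : ℕ → ℝ} (hy : y ∈ powWeightedBall α)
    {j : ℕ} (hj : 1 ≤ j) : |y j| ≤ (j : ℝ) ^ (-α) := by
  have hj0 : (0 : ℝ) < j := by exact_mod_cast hj
  rw [Real.rpow_neg hj0.le, ← one_div, le_div_iff₀ (by positivity)]
  simpa using hy.2 {j}

theorem abs_sub_mul_round_div {δ : ℝ} (hδ : 0 < δ) (a : ℝ) :
    |a - δ * round (a / δ)| = δ * |a / δ - round (a / δ)| := by
  rw [← abs_of_pos hδ, ← abs_mul, abs_of_pos hδ, mul_sub, mul_div_cancel₀ a hδ.ne']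

theorem abs_sub_mul_round_div_le {δ : ℝ} (hδ : 0 < δ) (a : ℝ) :
    |a - δ * round (a / δ)| ≤ δ := by
  rw [abs_sub_mul_round_div hδ]
  exact mul_le_of_le_one_right hδ.le ((abs_sub_round _).trans (by norm_num))

theorem abs_sub_mul_round_div_le_abs {δ : ℝ} (hδ : 0 < δ) (a : ℝ) :
    |a - δ * round (a / δ)| ≤ |a| := by
  have h := round_le (a / δ) 0
  rw [Int.cast_zero, sub_zero, abs_div, abs_of_pos hδ, le_div_iff₀' hδ] at h
  rwa [abs_sub_mul_round_div hδ]

theorem abs_round_div_le {δ : ℝ} (hδ : 0 < δ) (a : ℝ) :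
    |(round (a / δ) : ℝ)| ≤ 2 * |a| / δ := by
  rw [le_div_iff₀' hδ]
  calc δ * |(round (a / δ) : ℝ)| = |a - (a - δ * round (a / δ))| := by
        rw [sub_sub_cancel, abs_mul, abs_of_pos hδ]
    _ ≤ |a| + |a - δ * round (a / δ)| := abs_sub _ _
    _ ≤ 2 * |a| := by linarith [abs_sub_mul_round_div_le_abs hδ a]

section PowWeightedBall

variable {α s δ : ℝ} {y : ℕ → ℝ}

theorem sum_abs_round_mul_rpow_le (hy : y ∈ powWeightedBall α) (hs : 0 < s) (hδ : 0 < δ)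
    (S : Finset ℕ) :
    ∑ j ∈ S, |(round (y j / δ) : ℝ)| * (j / s) ^ α ≤ 2 / (δ * s ^ α) := by
  calc ∑ j ∈ S, |(round (y j / δ) : ℝ)| * (j / s) ^ α
      ≤ ∑ j ∈ S, 2 * |y j| / δ * (j / s) ^ α := by
        gcongr with j
        exact abs_round_div_le hδ (y j)
    _ = 2 / (δ * s ^ α) * ∑ j ∈ S, |y j| * (j : ℝ) ^ α := by
        rw [Finset.mul_sum]
        refine Finset.sum_congr rfl fun j _ => ?_
        rw [Real.div_rpow j.cast_nonneg hs.le]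
        field_simp
    _ ≤ 2 / (δ * s ^ α) := mul_le_of_le_one_right (by positivity) (hy.2 S)

theorem sum_abs_sub_mul_round_le (hα : 0 ≤ α) (hy : y ∈ powWeightedBall α) (hs : 0 < s)
    (hδ : 0 < δ) (S : Finset ℕ) :
    ∑ j ∈ S, |y j - δ * round (y j / δ)| ≤ s * δ + s ^ (-α) := by
  have hpoint (j : ℕ) : |y j - δ * round (y j / δ)| ≤
      (if j ∈ Finset.Icc 1 ⌊s⌋₊ then δ else 0) + |y j| * (j : ℝ) ^ α * s ^ (-α) := by
    have hnonneg : 0 ≤ |y j| * (j : ℝ) ^ α * s ^ (-α) := by positivity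
    split_ifs with hj
    · linarith [abs_sub_mul_round_div_le hδ (y j)]
    rw [zero_add]
    refine (abs_sub_mul_round_div_le_abs hδ (y j)).trans ?_
    rcases Nat.eq_zero_or_pos j with rfl | hj0
    · simp [hy.1]
    have hsj : s ≤ j := by
      rw [Finset.mem_Icc, not_and, not_le] at hj
      exact ((Nat.floor_lt hs.le).1 (hj hj0)).le
    rw [mul_assoc, Real.rpow_neg hs.le, ← div_eq_mul_inv]
    refine le_mul_of_one_le_right (abs_nonneg _) ?_
    rw [one_le_div (by positivity)]
    gcongr
  calc ∑ j ∈ S, |y j - δ * round (y j / δ)|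
      ≤ ∑ j ∈ S, ((if j ∈ Finset.Icc 1 ⌊s⌋₊ then δ else 0) +
          |y j| * (j : ℝ) ^ α * s ^ (-α)) := Finset.sum_le_sum fun j _ => hpoint j
    _ = (S ∩ Finset.Icc 1 ⌊s⌋₊).card * δ + (∑ j ∈ S, |y j| * (j : ℝ) ^ α) * s ^ (-α) := by
        rw [Finset.sum_add_distrib, Finset.sum_ite_mem, Finset.sum_const, nsmul_eq_mul,
          Finset.sum_mul]
    _ ≤ s * δ + 1 * s ^ (-α) := by
        gcongr
        · calc ((S ∩ Finset.Icc 1 ⌊s⌋₊).card : ℝ) ≤ (Finset.Icc 1 ⌊s⌋₊).card := by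
                exact_mod_cast Finset.card_le_card Finset.inter_subset_right
            _ = ⌊s⌋₊ := by simp
            _ ≤ s := Nat.floor_le hs.le
        · exact hy.2 S
    _ = s * δ + s ^ (-α) := by rw [one_mul]

theorem exists_forall_round_div_eq_zero (hα : 0 < α) (hδ : 0 < δ) :
    ∃ J : ℕ, ∀ y ∈ powWeightedBall α, ∀ j ∉ Finset.Icc 1 J, round (y j / δ) = 0 := by
  have hlim : Filter.Tendsto (fun j : ℕ => (j : ℝ) ^ (-α)) Filter.atTop (nhds 0) :=
    (tendsto_rpow_neg_atTop hα).comp tendsto_natCast_atTop_atTop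
  obtain ⟨J, hJ⟩ := Filter.eventually_atTop.1 (hlim.eventually_lt_const (half_pos hδ))
  refine ⟨J, fun y hy j hj => ?_⟩
  rcases Nat.eq_zero_or_pos j with rfl | hj0
  · simp [hy.1]
  rw [Finset.mem_Icc, not_and, not_le] at hj
  have hyj := (abs_le_rpow_neg_of_mem_powWeightedBall hy hj0).trans_lt (hJ j (hj hj0).le)
  obtain ⟨hlo, hhi⟩ := abs_lt.1 hyj
  rw [round_eq_zero_iff, Set.mem_Ico, le_div_iff₀ hδ, div_lt_iff₀ hδ]
  constructor <;> linarith

variable {p : ℝ≥0∞} [Fact (1 ≤ p)]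

theorem norm_sub_sum_single_mul_round_le (hα : 0 ≤ α) (hs : 0 < s) {y : lp (fun _ : ℕ => ℝ) p}
    (hy : ⇑y ∈ powWeightedBall α) {S : Finset ℕ}
    (hS : ∀ j ∉ S, round (y j / s ^ (-α - 1)) = 0) :
    ‖y - ∑ j ∈ S, lp.single p j (s ^ (-α - 1) * round (y j / s ^ (-α - 1)))‖ ≤
      2 * s ^ (-α - 1 + (1 / p).toReal) := by
  set δ := s ^ (-α - 1)
  have hδ : 0 < δ := by positivity
  have hsδ : s * δ = s ^ (-α) := by rw [mul_comm, ← Real.rpow_add_one hs.ne', sub_add_cancel]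
  set e := y - ∑ j ∈ S, lp.single p j (δ * round (y j / δ))
  have he (j : ℕ) : e j = y j - δ * round (y j / δ) := by
    rw [lp.coeFn_sub, Pi.sub_apply, lp.coeFn_sum, Finset.sum_apply]
    simp only [lp.coeFn_single, Finset.sum_pi_single]
    split_ifs with hj
    · rfl
    · simp [hS j hj]
  have hsup (j : ℕ) : ‖e j‖ ≤ δ := by
    rw [he, Real.norm_eq_abs]
    exact abs_sub_mul_round_div_le hδ (y j)
  have hsum (T : Finset ℕ) : ∑ j ∈ T, ‖e j‖ ≤ 2 * (s * δ) := by
    simp only [he, Real.norm_eq_abs]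
    linarith [sum_abs_sub_mul_round_le hα hy hs hδ T]
  have hp : p⁻¹.toReal ≤ 1 := by
    rw [← ENNReal.toReal_one]
    exact ENNReal.toReal_mono ENNReal.one_ne_top (ENNReal.inv_le_one.2 Fact.out)
  calc ‖e‖ ≤ δ ^ (1 - p⁻¹.toReal) * (2 * (s * δ)) ^ p⁻¹.toReal :=
        lp_norm_le_rpow_mul_rpow hδ.le e hsup hsum
    _ = 2 ^ p⁻¹.toReal * (δ * s ^ p⁻¹.toReal) := by
        rw [Real.mul_rpow (by positivity) (by positivity), Real.mul_rpow hs.le hδ.le,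
          Real.rpow_sub hδ, Real.rpow_one]
        field_simp
    _ ≤ 2 ^ (1 : ℝ) * (δ * s ^ p⁻¹.toReal) := by
        gcongr
        norm_num
    _ = 2 * s ^ (-α - 1 + (1 / p).toReal) := by
        rw [Real.rpow_one, ← Real.rpow_add hs, one_div]

theorem exists_entropyNumber_le_of_subset_powWeightedBall (hα : 0 < α) :
    ∃ C : ℝ, 0 < C ∧ ∀ n : ℕ, 1 ≤ n → ∀ K : Set (lp (fun _ : ℕ => ℝ) p),
      (∀ y ∈ K, ⇑y ∈ powWeightedBall α) →
        entropyNumber n K ≤ C * (n : ℝ) ^ (-α - 1 + (1 / p).toReal) := by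
  obtain ⟨γ, hγ, hcard⟩ := exists_encard_setOf_sum_abs_mul_rpow_le hα
  refine ⟨2 * γ ^ (-α - 1 + (1 / p).toReal), by positivity, fun n hn K hK => ?_⟩
  have hn0 : (0 : ℝ) < n := by exact_mod_cast hn
  rw [mul_assoc, ← Real.mul_rpow hγ.le hn0.le]
  have hs : 0 < γ * n := by positivity
  set s : ℝ := γ * n
  set δ : ℝ := s ^ (-α - 1)
  have hδ : 0 < δ := by positivity
  have hδs : 2 / (δ * s ^ α) = 2 * s := by
    rw [← Real.rpow_add hs, sub_add_eq_add_sub, neg_add_cancel, zero_sub, Real.rpow_neg_one,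
      div_inv_eq_mul]
  obtain ⟨J, hJ⟩ := exists_forall_round_div_eq_zero hα hδ
  let center (m : Finset.Icc 1 J → ℤ) : lp (fun _ : ℕ => ℝ) p :=
    ∑ j : Finset.Icc 1 J, lp.single p j.1 (δ * m j)
  refine entropyNumber_le_of_encard_le (by positivity)
    ((Set.encard_image_le center _).trans (hcard n hn J)) fun y hy =>
      ⟨center fun j => round (y j / δ), Set.mem_image_of_mem center ?_, ?_⟩
  · have h := sum_abs_round_mul_rpow_le (hK y hy) hs hδ (Finset.Icc 1 J)
    rwa [← Finset.sum_coe_sort, hδs] at h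
  · have h := norm_sub_sum_single_mul_round_le hα.le hs (hK y hy) (hJ y (hK y hy))
    rwa [← Finset.sum_coe_sort] at h

end PowWeightedBall

theorem abs_le_rpow_neg_of_eq_dyadic {α : ℝ} (hα : 0 ≤ α) {x : ℕ → ℝ}
    (hx : ∀ k j : ℕ, 1 ≤ k → 2 ^ (k - 1) ≤ j → j ≤ 2 ^ k - 1 →
      x j = (2 : ℝ) ^ (-(k : ℝ) * α)) {j : ℕ} (hj : 1 ≤ j) :
    |x j| ≤ (j : ℝ) ^ (-α) := by
  have hlog := Nat.pow_log_le_self 2 (by omega : j ≠ 0)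
  have hlt := Nat.lt_pow_succ_log_self one_lt_two j
  have hxj := hx (Nat.log 2 j + 1) j (by omega) (by simpa using hlog) (by omega)
  rw [hxj, abs_of_pos (by positivity), neg_mul, ← mul_neg, Real.rpow_mul two_pos.le,
    Real.rpow_natCast]
  refine Real.rpow_le_rpow_of_nonpos (by exact_mod_cast hj) ?_ (by linarith)
  exact_mod_cast hlt.le

theorem entropyNumber_symConvexHull_single_le_general
    (α : ℝ) (hα : 0 < α) (p : ℝ≥0∞) [Fact (1 ≤ p)] (x : ℕ → ℝ)
    (hx : ∀ j : ℕ, 1 ≤ j → |x j| ≤ (j : ℝ) ^ (-α)) :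
    ∃ C : ℝ, 0 < C ∧ ∀ n : ℕ, 1 ≤ n →
      entropyNumber n (symConvexHull
          {y : lp (fun _ : ℕ => ℝ) p | ∃ j : ℕ, 1 ≤ j ∧ y = lp.single p j (x j)})
        ≤ C * (n : ℝ) ^ (-α - 1 + (1 / p).toReal) := by
  obtain ⟨C, hC, hentropy⟩ := exists_entropyNumber_le_of_subset_powWeightedBall (p := p) hα
  exact ⟨C, hC, fun n hn => hentropy n hn _ fun _ hy =>
    coe_mem_powWeightedBall_of_mem_symConvexHull hx hy⟩

/-- entropy numbers of the symmetric convex hull of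
`{x_j e_j : j ≥ 1} ⊂ ℓ_p`, where `x_j = 2^{-kα}` for `2^{k-1} ≤ j ≤ 2^k - 1`. -/
theorem entropyNumber_symConvexHull_single_le
    (α : ℝ) (hα : 1 < α) (p : ℝ≥0∞) [Fact (1 ≤ p)] (x : ℕ → ℝ)
    (hx : ∀ k j : ℕ, 1 ≤ k → 2 ^ (k - 1) ≤ j → j ≤ 2 ^ k - 1 →
      x j = (2 : ℝ) ^ (-(k : ℝ) * α)) :
    ∃ C : ℝ, 0 < C ∧ ∀ n : ℕ, 1 ≤ n →
      entropyNumber n (symConvexHull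
          {y : lp (fun _ : ℕ => ℝ) p | ∃ j : ℕ, 1 ≤ j ∧ y = lp.single p j (x j)})
        ≤ C * (n : ℝ) ^ (-α - 1 + (1 / p).toReal) :=
  entropyNumber_symConvexHull_single_le_general α (by linarith) p x
    fun _ hj => abs_le_rpow_neg_of_eq_dyadic (by linarith) hx hj
end

section
/- Let (a_n)_{n≥0} and (b_n)_{n≥1} be non-negative real sequences with a_0 > 0 satisfying a_n ≤ a_{n−1}(1 − b_n a_{n−1}) for all n ≥ 1, and set b_0 = 1/a_0. Then a_n ≤ 1/(b_0 + b_1 + ⋯ + b_n) for all n ≥ 0. -/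
open scoped RealInnerProductSpace

/-!
The recursion makes the reciprocal of `a` grow by at least `b (n + 1)` at each step: with
`t = b (n + 1) * a n`, the bound `(1 - t) * (1 + t) ≤ 1` gives
`1 / a (n + 1) ≥ (1 + t) / a n = 1 / a n + b (n + 1)`.
The induction runs on the division-free form `a n * (b 0 + ⋯ + b n) ≤ 1`, which survives `a n = 0`.
-/

lemma sum_range_succ_pos_of_nonneg_of_pos {M : Type*} [AddCommMonoid M] [PartialOrder M]
    [IsOrderedAddMonoid M] {f : ℕ → M} (hf : ∀ n, 0 ≤ f (n + 1)) (hf0 : 0 < f 0) (n : ℕ) :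
    0 < ∑ i ∈ Finset.range (n + 1), f i := by
  rw [Finset.sum_range_succ']
  exact hf0.trans_le (le_add_of_nonneg_left (Finset.sum_nonneg fun i _ => hf i))

section OrderedRing

variable {R : Type*} [CommRing R] [LinearOrder R] [IsStrictOrderedRing R]

lemma mul_add_le_one_of_le_mul_one_sub {x y β S : R} (hx : 0 ≤ x) (hy : 0 ≤ y)
    (hxS : x * S ≤ 1) (hyx : y ≤ x * (1 - β * x)) : y * (S + β) ≤ 1 := by
  rcases hx.eq_or_lt with rfl | hx_pos
  · have hy_zero : y = 0 := le_antisymm (by simpa using hyx) hy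
    simp [hy_zero]
  have hstep : x * (y * (S + β)) ≤ y * (1 + β * x) :=
    calc x * (y * (S + β)) = y * (x * S + β * x) := by ring
      _ ≤ y * (1 + β * x) := by gcongr
  refine le_of_mul_le_mul_left (hstep.trans ?_) hx_pos
  rcases le_total 0 (1 + β * x) with hβ | hβ
  · calc y * (1 + β * x) ≤ x * (1 - β * x) * (1 + β * x) := by gcongr
      _ = x * (1 - (β * x) ^ 2) := by ring
      _ ≤ x * 1 := by gcongr; exact sub_le_self 1 (sq_nonneg _)
  · exact (mul_nonpos_of_nonneg_of_nonpos hy hβ).trans (by simpa using hx)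

theorem recursive_sequence_bound_general {a b : ℕ → R} (ha : ∀ n, 0 ≤ a n)
    (hab0 : a 0 * b 0 ≤ 1) (hrec : ∀ n, a (n + 1) ≤ a n * (1 - b (n + 1) * a n)) (n : ℕ) :
    a n * ∑ i ∈ Finset.range (n + 1), b i ≤ 1 := by
  induction n with
  | zero => simpa using hab0
  | succ n ih =>
    rw [Finset.sum_range_succ]
    exact mul_add_le_one_of_le_mul_one_sub (ha n) (ha (n + 1)) ih (hrec n)

end OrderedRing

/-- elementary recursion bound for non-negative sequences
(Lemma 4.1 of the paper). -/
theorem recursive_sequence_bound (a b : ℕ → ℝ)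
    (ha : ∀ n, 0 ≤ a n) (hb : ∀ n, 1 ≤ n → 0 ≤ b n)
    (ha0 : 0 < a 0) (hb0 : b 0 = 1 / a 0)
    (hrec : ∀ n, 1 ≤ n → a n ≤ a (n - 1) * (1 - b n * a (n - 1))) :
    ∀ n : ℕ, a n ≤ 1 / (∑ i ∈ Finset.range (n + 1), b i) := by
  intro n
  have hsum_pos := sum_range_succ_pos_of_nonneg_of_pos (fun k => hb (k + 1) k.succ_pos)
    (hb0 ▸ one_div_pos.2 ha0) n
  rw [le_div_iff₀ hsum_pos]
  exact recursive_sequence_bound_general ha (by rw [hb0, mul_one_div_cancel ha0.ne'])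
    (fun k => hrec (k + 1) k.succ_pos) n
end
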